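/- arXiv:2407.13634 — 4 statements merged into one kernel-verified Lean document; each statement's English description precedes it below -/
import Mathlib

section
/- Fix reals p > q ≥ 0. For n agents whose additive valuations assign each item a value in {p, q}, there exists a fractional allocation rule F on such profiles such that: (i) F is truthful; (ii) for every profile, the fractional allocation output by F is Pareto-optimal among all fractional allocations; and (iii) for every profile, the fractional allocation output by F is EF1-realizable. -/
open Finset

/-- `A` is an ordered partition of the item set `M` into `n` bundles. -/
def IsPartition {ι : Type*} [DecidableEq ι] {n : ℕ} (M : Finset ι)
    (A : Fin n → Finset ι) : Prop :=
  (∀ i, A i ⊆ M) ∧ (∀ i j, i ≠ j → Disjoint (A i) (A j)) ∧ (∀ g ∈ M, ∃ i, g ∈ A i)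

/-- The allocation `A` of the items `M` is EF^{+u}_{-w} for the additive valuations `v`. -/
def EFpm {ι : Type*} [DecidableEq ι] {n : ℕ} (M : Finset ι) (v : Fin n → ι → ℝ)
    (A : Fin n → Finset ι) (u w : ℕ) : Prop :=
  ∀ i j : Fin n, ∃ Si Sj : Finset ι,
    Si ⊆ M ∧ Disjoint Si (A i) ∧ Si.card ≤ u ∧
    Sj ⊆ A j ∧ Sj.card ≤ w ∧
    ∑ g ∈ A j \ Sj, v i g ≤ ∑ g ∈ A i ∪ Si, v i g

/-- The fractional allocation `x` is Pareto-optimal among all fractional allocations. -/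
def FracParetoOptimal {n m : ℕ} (v : Fin n → Fin m → ℝ)
    (x : Fin n → Fin m → ℝ) : Prop :=
  ¬ ∃ y : Fin n → Fin m → ℝ,
      (∀ i g, 0 ≤ y i g) ∧ (∀ g, ∑ i, y i g = 1) ∧
      (∀ i, ∑ g, v i g * x i g ≤ ∑ g, v i g * y i g) ∧
      (∃ i, ∑ g, v i g * x i g < ∑ g, v i g * y i g)

/-- The fractional allocation `x` is EF1-realizable for the valuations `v`. -/
def EF1Realizable {n m : ℕ} (v : Fin n → Fin m → ℝ) (x : Fin n → Fin m → ℝ) : Prop :=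
  ∃ (K : ℕ) (p : Fin K → ℝ) (A : Fin K → Fin n → Finset (Fin m)),
    (∀ k, 0 ≤ p k) ∧ (∑ k, p k = 1) ∧
    (∀ k, IsPartition Finset.univ (A k)) ∧
    (∀ k, EFpm Finset.univ v (A k) 0 1) ∧
    (∀ i g, ∑ k, (if g ∈ A k i then p k else 0) = x i g)


/-- signed incidence coefficient -/
noncomputable def incid {V E : Type*} [DecidableEq V] (s t : E → V) (e : E) (v : V) : ℝ :=
  (if s e = v then 1 else 0) - (if t e = v then 1 else 0)

def IsCirc {V E : Type*} [DecidableEq V] [Fintype E] (s t : E → V) (f : E → ℝ) : Prop :=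
  ∀ v, ∑ e, f e * incid s t e v = 0

def IsIntR (x : ℝ) : Prop := x ∈ (Int.castRingHom ℝ).range

lemma isIntR_incid {V E : Type*} [DecidableEq V] (s t : E → V) (e : E) (v : V) :
    incid s t e v ∈ (Int.castRingHom ℝ).range := by
  unfold incid
  apply sub_mem <;> split_ifs <;> first | exact one_mem _ | exact zero_mem _

lemma circ_kernel {V E : Type*} [Fintype V] [DecidableEq V] [Fintype E] (s t : E → V)
    (f : E → ℝ) (hf : IsCirc s t f) (e₀ : E) (he₀ : ¬ IsIntR (f e₀)) :
    ∃ d : E → ℝ, d ≠ 0 ∧ IsCirc s t d ∧ ∀ e, IsIntR (f e) → d e = 0 := by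
  classical
  let EF := {e : E // ¬ IsIntR (f e)}
  let VF := {v : V // ∃ e : EF, s e = v ∨ t e = v}
  have hdeg : ∀ v : VF, 2 ≤ ∑ e : EF, ((if s e = v then 1 else 0) + (if t e = v then 1 else 0) : ℕ) := by
    rintro ⟨v, e1, he1⟩
    by_contra hlt
    push Not at hlt
    simp only at hlt
    set k : EF → ℕ := fun e => ((if s e = v then 1 else 0) + (if t e = v then 1 else 0) : ℕ) with hk
    have h1 : 1 ≤ k e1 := by
      simp only [hk]
      rcases he1 with h | h <;> simp [h]
    have hlt' : ∑ e, k e < 2 := hlt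
    have hsplit : k e1 + ∑ e ∈ Finset.univ.erase e1, k e = ∑ e, k e :=
      Finset.add_sum_erase Finset.univ k (Finset.mem_univ e1)
    have hk1 : k e1 = 1 := by
      have : k e1 ≤ ∑ e, k e := by omega
      omega
    have hz : ∑ e ∈ Finset.univ.erase e1, k e = 0 := by omega
    have hz' : ∀ e : EF, e ≠ e1 → k e = 0 := by
      intro e he
      exact (Finset.sum_eq_zero_iff.mp hz) e (by simp [he])
    have hc := hf v
    rw [← Finset.add_sum_erase Finset.univ _ (Finset.mem_univ (e1 : E))] at hc
    have hrest : ∑ e ∈ Finset.univ.erase (e1 : E), f e * incid s t e v ∈ (Int.castRingHom ℝ).range := by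
      apply sum_mem
      intro e he
      by_cases hi : IsIntR (f e)
      · exact mul_mem hi (isIntR_incid s t e v)
      · have := hz' ⟨e, hi⟩ (by
          intro h
          simp only [Finset.mem_erase] at he
          exact he.1 (congrArg Subtype.val h))
        simp only [hk] at this
        have h3 : s e ≠ v := by intro h; simp [h] at this
        have h4 : t e ≠ v := by intro h; simp [h] at this
        simp [incid, h3, h4, zero_mem]
    apply e1.2
    have hval : f e1 * incid s t e1 v = - ∑ e ∈ Finset.univ.erase (e1 : E), f e * incid s t e v := by
      linarith
    have hm : f e1 * incid s t e1 v ∈ (Int.castRingHom ℝ).range := by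
      rw [hval]; exact neg_mem hrest
    simp only [hk] at hk1
    unfold IsIntR
    by_cases ha : s e1 = v <;> by_cases hb : t e1 = v
    · simp [ha, hb] at hk1
    · simpa [incid, ha, hb] using hm
    · simpa [incid, ha, hb] using hm
    · simp [ha, hb] at hk1
  have hcard : Fintype.card VF ≤ Fintype.card EF := by
    have h1 : Fintype.card VF * 2 ≤ ∑ v : VF, ∑ e : EF,
        ((if s e = v then 1 else 0) + (if t e = v then 1 else 0) : ℕ) := by
      have := Finset.card_nsmul_le_sum Finset.univ _ 2 (fun v _ => hdeg v)
      simpa using this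
    rw [Finset.sum_comm] at h1
    have h2 : ∀ e : EF, ∑ v : VF, ((if s e = v then 1 else 0) + (if t e = v then 1 else 0) : ℕ) ≤ 2 := by
      intro e
      rw [Finset.sum_add_distrib]
      have a1 : ∑ v : VF, (if s e = v then 1 else 0 : ℕ) ≤ 1 := by
        rw [Finset.sum_eq_single_of_mem (⟨s e, e, Or.inl rfl⟩ : VF) (Finset.mem_univ _)]
        · simp
        · intro b _ hb
          rw [if_neg]
          intro h
          exact hb (Subtype.ext h.symm)
      have a2 : ∑ v : VF, (if t e = v then 1 else 0 : ℕ) ≤ 1 := by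
        rw [Finset.sum_eq_single_of_mem (⟨t e, e, Or.inr rfl⟩ : VF) (Finset.mem_univ _)]
        · simp
        · intro b _ hb
          rw [if_neg]
          intro h
          exact hb (Subtype.ext h.symm)
      omega
    have h3 := Finset.sum_le_card_nsmul Finset.univ _ 2 (fun e _ => h2 e)
    simp only [Finset.card_univ, smul_eq_mul] at h3
    omega
  have hsum0 : ∀ e : EF, ∑ v : VF, incid s t e v = 0 := by
    intro e
    unfold incid
    rw [Finset.sum_sub_distrib]
    rw [Finset.sum_eq_single_of_mem (⟨s e, e, Or.inl rfl⟩ : VF) (Finset.mem_univ _),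
      Finset.sum_eq_single_of_mem (⟨t e, e, Or.inr rfl⟩ : VF) (Finset.mem_univ _)]
    · simp
    · intro b _ hb
      rw [if_neg]
      intro h
      exact hb (Subtype.ext h.symm)
    · intro b _ hb
      rw [if_neg]
      intro h
      exact hb (Subtype.ext h.symm)
  let T : (EF → ℝ) →ₗ[ℝ] (VF → ℝ) :=
    { toFun := fun d v => ∑ e : EF, d e * incid s t e v
      map_add' := by
        intro a b; funext v; simp [add_mul, Finset.sum_add_distrib]
      map_smul' := by
        intro a b; funext v; simp [Finset.mul_sum, mul_assoc] }
  have hT : ∀ d v, T d v = ∑ e : EF, d e * incid s t e v := fun _ _ => rfl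
  have hker : ∃ d : EF → ℝ, d ≠ 0 ∧ T d = 0 := by
    by_contra hno
    push Not at hno
    have hinj : Function.Injective T := by
      rw [← LinearMap.ker_eq_bot, LinearMap.ker_eq_bot']
      intro d hd
      by_contra h
      exact hno d h hd
    have hle := LinearMap.finrank_le_finrank_of_injective hinj
    simp only [Module.finrank_fintype_fun_eq_card] at hle
    have hsurj : Function.Surjective T := by
      refine (LinearMap.injective_iff_surjective_of_finrank_eq_finrank ?_).mp hinj
      simp only [Module.finrank_fintype_fun_eq_card]
      omega
    let v₀ : VF := ⟨s e₀, ⟨e₀, he₀⟩, Or.inl rfl⟩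
    obtain ⟨d, hd⟩ := hsurj (Pi.single v₀ 1)
    have : ∑ v : VF, T d v = 1 := by rw [hd]; simp
    have h0 : ∑ v : VF, T d v = 0 := by
      simp only [hT]
      rw [Finset.sum_comm]
      simp [← Finset.mul_sum, hsum0]
    linarith
  obtain ⟨d, hd0, hd⟩ := hker
  have hext : ∀ v, ∑ e : E, (if h : ¬ IsIntR (f e) then d ⟨e, h⟩ else 0) * incid s t e v
      = ∑ e : EF, d e * incid s t e v := by
    intro v
    rw [← Finset.sum_filter_add_sum_filter_not Finset.univ (fun e => ¬ IsIntR (f e))]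
    rw [Finset.sum_subtype (p := fun e => ¬ IsIntR (f e)) _ (by simp)]
    rw [Finset.sum_eq_zero (s := Finset.filter (fun e => ¬ ¬ IsIntR (f e)) Finset.univ)]
    · rw [add_zero]
      apply Finset.sum_congr rfl
      intro e _
      rw [dif_pos e.2]
    · intro e he
      simp only [Finset.mem_filter] at he
      rw [dif_neg he.2, zero_mul]
  refine ⟨fun e => if h : ¬ IsIntR (f e) then d ⟨e, h⟩ else 0, ?_, ?_, ?_⟩
  · intro h
    apply hd0
    funext e
    have := congrFun h e.1
    simp only [Pi.zero_apply] at this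
    rw [dif_pos e.2] at this
    exact this
  · intro v
    simp only
    rw [hext]
    by_cases hv : ∃ e : EF, s e = v ∨ t e = v
    · exact congrFun hd ⟨v, hv⟩
    · push Not at hv
      apply Finset.sum_eq_zero
      intro e _
      simp [incid, (hv e).1, (hv e).2]
  · intro e he
    simp [he]

lemma isIntR_iff (x : ℝ) : IsIntR x ↔ ∃ z : ℤ, (z : ℝ) = x := by
  simp [IsIntR, RingHom.mem_range]

open Filter Topology in
lemma circ_mem_convexHull {V E : Type*} [Fintype V] [DecidableEq V] [Fintype E] (s t : E → V)
    (f : E → ℝ) (hf : IsCirc s t f) :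
    ∃ F : Finset (E → ℝ), f ∈ convexHull ℝ (F : Set (E → ℝ)) ∧ ∀ g ∈ F, IsCirc s t g ∧
      ∀ e, (∃ z : ℤ, (z : ℝ) = g e) ∧ (⌊f e⌋ : ℝ) ≤ g e ∧ g e ≤ ⌈f e⌉ := by
  classical
  let K : Set (E → ℝ) := {g | IsCirc s t g} ∩ Set.Icc (fun e => (⌊f e⌋ : ℝ)) (fun e => (⌈f e⌉ : ℝ))
  have hKc : IsCompact K := by
    apply IsCompact.inter_left isCompact_Icc
    simp only [IsCirc, Set.ofPred_forall]
    apply isClosed_iInter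
    intro v
    exact isClosed_eq (by fun_prop) (by fun_prop)
  have hKconv : Convex ℝ K := by
    apply Convex.inter _ (convex_Icc _ _)
    intro x hx y hy a b _ _ _ v
    have h1 := hx v
    have h2 := hy v
    simp only [Pi.add_apply, Pi.smul_apply, smul_eq_mul, add_mul, Finset.sum_add_distrib, mul_assoc,
      ← Finset.mul_sum, h1, h2]
    simp
  have hfK : f ∈ K := ⟨hf, fun e => Int.floor_le _, fun e => Int.le_ceil _⟩
  let S : Set (E → ℝ) := {g | g ∈ K ∧ ∀ e, ∃ z : ℤ, (z : ℝ) = g e}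
  have hSfin : S.Finite := by
    have : (Set.Icc (fun e => ⌊f e⌋) (fun e => ⌈f e⌉)).Finite := Set.finite_Icc _ _
    refine (this.image (fun (z : E → ℤ) (e : E) => (z e : ℝ))).subset ?_
    rintro g ⟨⟨_, hg1, hg2⟩, hg⟩
    choose z hz using hg
    refine ⟨z, ⟨fun e => ?_, fun e => ?_⟩, funext hz⟩
    · have := hg1 e; simp only at this; rw [← hz] at this; exact_mod_cast this
    · have := hg2 e; simp only at this; rw [← hz] at this; exact_mod_cast this
  have hext : K.extremePoints ℝ ⊆ S := by
    intro g hg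
    refine ⟨hg.1, ?_⟩
    by_contra hno
    push Not at hno
    obtain ⟨e₀, he₀⟩ := hno
    obtain ⟨d, hd0, hdc, hdi⟩ := circ_kernel s t g hg.1.1 e₀ (by
      rw [isIntR_iff]; push Not; exact he₀)
    have key : ∀ σ : ℝ, ∀ᶠ ε in 𝓝[>] (0:ℝ), g + (σ * ε) • d ∈ K := by
      intro σ
      have : ∀ e, ∀ᶠ ε in 𝓝[>] (0:ℝ), (⌊f e⌋ : ℝ) ≤ g e + (σ * ε) * d e ∧ g e + (σ * ε) * d e ≤ ⌈f e⌉ := by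
        intro e
        have hb1 := hg.1.2.1 e
        have hb2 := hg.1.2.2 e
        simp only at hb1 hb2
        by_cases hi : IsIntR (g e)
        · simp [hdi e hi, hb1, hb2]
        · rw [isIntR_iff] at hi
          push Not at hi
          have hb1' := lt_of_le_of_ne hb1 (hi _)
          have hb2' := lt_of_le_of_ne hb2 (hi _).symm
          have hcont : Tendsto (fun ε : ℝ => g e + (σ * ε) * d e) (𝓝[>] 0) (𝓝 (g e)) := by
            have : Continuous (fun ε : ℝ => g e + (σ * ε) * d e) := by fun_prop
            have h := this.tendsto 0
            simp only [mul_zero, zero_mul, add_zero] at h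
            exact h.mono_left nhdsWithin_le_nhds
          filter_upwards [hcont.eventually (lt_mem_nhds hb1'), hcont.eventually (gt_mem_nhds hb2')] with ε h1 h2
          exact ⟨h1.le, h2.le⟩
      filter_upwards [eventually_all.mpr this] with ε hε
      refine ⟨?_, fun e => by simpa using (hε e).1, fun e => by simpa using (hε e).2⟩
      intro v
      have h1 := hg.1.1 v
      have h2 := hdc v
      simp only [Pi.add_apply, Pi.smul_apply, smul_eq_mul, add_mul, Finset.sum_add_distrib, mul_assoc,
        ← Finset.mul_sum, h1, h2]
      simp
    obtain ⟨ε, ⟨h1, h2⟩, hε⟩ := ((key 1).and (key (-1))).and self_mem_nhdsWithin |>.exists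
    have hε : 0 < ε := hε
    have := hg.2 h1 h2 ⟨1/2, 1/2, by norm_num, by norm_num, by norm_num, by
      ext e; simp; ring⟩
    apply hd0
    ext e
    have h3 := congrFun this e
    simp at h3
    rcases h3 with h3 | h3
    · exact absurd h3 hε.ne'
    · simpa using h3
  refine ⟨hSfin.toFinset, ?_, ?_⟩
  · have hKM := closure_convexHull_extremePoints hKc hKconv
    rw [← hKM] at hfK
    have : closure (convexHull ℝ (K.extremePoints ℝ)) ⊆ convexHull ℝ S := by
      apply closure_minimal (convexHull_mono hext)
      exact hSfin.isClosed_convexHull ℝ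
    simpa using this hfK
  · intro g hg
    simp only [Set.Finite.mem_toFinset] at hg
    exact ⟨hg.1.1, fun e => ⟨hg.2 e, hg.1.2.1 e, hg.1.2.2 e⟩⟩


abbrev REdge (n m : ℕ) := Fin m ⊕ (Fin n × Fin m) ⊕ Fin n ⊕ Fin n
abbrev RNode (n m : ℕ) := Unit ⊕ Fin m ⊕ Fin n ⊕ Fin n

def rsrc {n m : ℕ} : REdge n m → RNode n m
  | .inl _ => .inl ()
  | .inr (.inl e) => .inr (.inl e.2)
  | .inr (.inr (.inl i)) => .inr (.inr (.inl i))
  | .inr (.inr (.inr i)) => .inr (.inr (.inr i))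

def rtgt {n m : ℕ} (L : Fin n → Finset (Fin m)) : REdge n m → RNode n m
  | .inl g => .inr (.inl g)
  | .inr (.inl e) => if e.2 ∈ L e.1 then .inr (.inr (.inl e.1)) else .inr (.inr (.inr e.1))
  | .inr (.inr (.inl i)) => .inr (.inr (.inr i))
  | .inr (.inr (.inr _)) => .inl ()

lemma rt_ne_item {n m : ℕ} (L : Fin n → Finset (Fin m)) (i : Fin n) (g h : Fin m) :
    rtgt L (.inr (.inl (i, g))) ≠ .inr (.inl h) := by
  simp only [rtgt]; split_ifs <;> simp

lemma rt_ne_root {n m : ℕ} (L : Fin n → Finset (Fin m)) (i : Fin n) (g : Fin m) :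
    rtgt L (.inr (.inl (i, g))) ≠ .inl () := by
  simp only [rtgt]; split_ifs <;> simp

lemma rt_like {n m : ℕ} (L : Fin n → Finset (Fin m)) (i j : Fin n) (g : Fin m) :
    rtgt L (.inr (.inl (i, g))) = .inr (.inr (.inl j)) ↔ i = j ∧ g ∈ L i := by
  simp only [rtgt]; split_ifs with h <;> simp [h]

lemma rt_tot {n m : ℕ} (L : Fin n → Finset (Fin m)) (i j : Fin n) (g : Fin m) :
    rtgt L (.inr (.inl (i, g))) = .inr (.inr (.inr j)) ↔ i = j ∧ g ∉ L i := by
  simp only [rtgt]; split_ifs with h <;> simp [h]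

lemma rcirc_item {n m : ℕ} (L : Fin n → Finset (Fin m)) (f : REdge n m → ℝ) (g : Fin m) :
    ∑ e, f e * incid rsrc (rtgt L) e (.inr (.inl g)) =
      (∑ i, f (.inr (.inl (i, g)))) - f (.inl g) := by
  simp only [Fintype.sum_sum_type, Fintype.sum_prod_type, incid, rt_ne_item]
  simp [rsrc, rtgt]
  ring

lemma rcirc_root {n m : ℕ} (L : Fin n → Finset (Fin m)) (f : REdge n m → ℝ) :
    ∑ e, f e * incid rsrc (rtgt L) e (.inl ()) =
      (∑ g, f (.inl g)) - ∑ i, f (.inr (.inr (.inr i))) := by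
  simp only [Fintype.sum_sum_type, Fintype.sum_prod_type, incid, rt_ne_root]
  simp [rsrc, rtgt]
  ring

lemma rcirc_like {n m : ℕ} (L : Fin n → Finset (Fin m)) (f : REdge n m → ℝ) (j : Fin n) :
    ∑ e, f e * incid rsrc (rtgt L) e (.inr (.inr (.inl j))) =
      f (.inr (.inr (.inl j))) - ∑ g ∈ L j, f (.inr (.inl (j, g))) := by
  simp only [Fintype.sum_sum_type, Fintype.sum_prod_type, incid, rt_like]
  simp [rsrc, rtgt, ite_and]
  ring

lemma rcirc_tot {n m : ℕ} (L : Fin n → Finset (Fin m)) (f : REdge n m → ℝ) (j : Fin n) :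
    ∑ e, f e * incid rsrc (rtgt L) e (.inr (.inr (.inr j))) =
      f (.inr (.inr (.inr j))) - f (.inr (.inr (.inl j))) - ∑ g with g ∉ L j, f (.inr (.inl (j, g))) := by
  simp only [Fintype.sum_sum_type, Fintype.sum_prod_type, incid, rt_tot]
  simp [rsrc, rtgt, ite_and]
  simp only [Finset.sum_filter, ite_not]
  ring

lemma sum_like_split {n m : ℕ} (L : Fin n → Finset (Fin m)) (j : Fin n) (f : Fin m → ℝ) :
    ∑ g ∈ L j, f g + ∑ g with g ∉ L j, f g = ∑ g, f g := by
  rw [← Finset.sum_filter_add_sum_filter_not Finset.univ (fun g => g ∈ L j)]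
  simp

lemma rounding {n m : ℕ} (L : Fin n → Finset (Fin m)) (x : Fin n → Fin m → ℝ)
    (hx0 : ∀ i g, 0 ≤ x i g) (hx1 : ∀ g, ∑ i, x i g = 1) :
    ∃ (K : ℕ) (p : Fin K → ℝ) (A : Fin K → Fin n → Finset (Fin m)),
    (∀ k, 0 ≤ p k) ∧ (∑ k, p k = 1) ∧
    (∀ k, IsPartition Finset.univ (A k)) ∧
    (∀ i g, ∑ k, (if g ∈ A k i then p k else 0) = x i g) ∧
    (∀ k i g, g ∈ A k i → 0 < x i g) ∧
    (∀ k i, ⌊∑ g ∈ L i, x i g⌋ ≤ ((A k i ∩ L i).card : ℤ) ∧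
      ((A k i ∩ L i).card : ℤ) ≤ ⌈∑ g ∈ L i, x i g⌉) ∧
    (∀ k i, ⌊∑ g, x i g⌋ ≤ ((A k i).card : ℤ) ∧ ((A k i).card : ℤ) ≤ ⌈∑ g, x i g⌉) := by
  classical
  let f : REdge n m → ℝ := fun e => match e with
    | .inl _ => 1
    | .inr (.inl e) => x e.1 e.2
    | .inr (.inr (.inl i)) => ∑ g ∈ L i, x i g
    | .inr (.inr (.inr i)) => ∑ g, x i g
  have hf : IsCirc rsrc (rtgt L) f := by
    rintro (_ | g | j | j)
    · rw [rcirc_root]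
      simp only [f]
      rw [Finset.sum_comm]
      simp [hx1]
    · rw [rcirc_item]
      simp [f, hx1]
    · rw [rcirc_like]
      simp [f]
    · rw [rcirc_tot]
      simp only [f]
      rw [← sum_like_split L j (x j)]; ring
  obtain ⟨F, hF, hFp⟩ := circ_mem_convexHull _ _ f hf
  rw [Finset.mem_convexHull'] at hF
  obtain ⟨w, hw0, hw1, hwf⟩ := hF
  -- properties of integer points
  have h01 : ∀ φ ∈ F, ∀ i g, φ (.inr (.inl (i, g))) = 0 ∨ φ (.inr (.inl (i, g))) = 1 := by
    intro φ hφ i g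
    obtain ⟨⟨z, hz⟩, h1, h2⟩ := (hFp φ hφ).2 (.inr (.inl (i, g)))
    simp only [f] at h1 h2
    have hle : x i g ≤ 1 := by
      rw [← hx1 g]
      exact Finset.single_le_sum (f := fun i => x i g) (fun i _ => hx0 i g) (Finset.mem_univ i)
    rw [← hz] at h1 h2 ⊢
    have h1' : (0:ℤ) ≤ z := (Int.floor_nonneg.mpr (hx0 i g)).trans (by exact_mod_cast h1)
    have h2' : z ≤ 1 := le_trans (by exact_mod_cast h2) (Int.ceil_le.mpr (by simpa using hle))
    have : z = 0 ∨ z = 1 := by omega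
    rcases this with h | h <;> simp [h]
  have hpos : ∀ φ ∈ F, ∀ i g, φ (.inr (.inl (i, g))) = 1 → 0 < x i g := by
    intro φ hφ i g h
    obtain ⟨_, h1, h2⟩ := (hFp φ hφ).2 (.inr (.inl (i, g)))
    simp only [f] at h1 h2
    rcases lt_or_eq_of_le (hx0 i g) with h3 | h3
    · exact h3
    · rw [← h3, h] at h2
      simp at h2
      linarith
  have hitem : ∀ φ ∈ F, ∀ g, ∑ i, φ (.inr (.inl (i, g))) = 1 := by
    intro φ hφ g
    have h := (hFp φ hφ).1 (.inr (.inl g))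
    rw [rcirc_item] at h
    obtain ⟨_, h1, h2⟩ := (hFp φ hφ).2 (.inl g)
    simp [f] at h1 h2
    linarith
  let B : (REdge n m → ℝ) → Fin n → Finset (Fin m) := fun φ i =>
    Finset.univ.filter fun g => φ (.inr (.inl (i, g))) = 1
  have hval : ∀ φ ∈ F, ∀ i g, φ (.inr (.inl (i, g))) = if g ∈ B φ i then 1 else 0 := by
    intro φ hφ i g
    simp only [B, Finset.mem_filter, Finset.mem_univ, true_and]
    rcases h01 φ hφ i g with h | h <;> simp [h]
  have hsumB : ∀ φ ∈ F, ∀ i (T : Finset (Fin m)), ∑ g ∈ T, φ (.inr (.inl (i, g))) = ((B φ i ∩ T).card : ℝ) := by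
    intro φ hφ i T
    rw [Finset.sum_congr rfl (fun g _ => hval φ hφ i g), Finset.sum_ite_mem, Finset.inter_comm]
    simp
  let eq := F.equivFin
  refine ⟨F.card, fun k => w (eq.symm k), fun k => B (eq.symm k), ?_, ?_, ?_, ?_, ?_, ?_, ?_⟩
  · intro k
    exact hw0 _ (eq.symm k).2
  · rw [Equiv.sum_comp eq.symm (fun φ => w φ), Finset.sum_coe_sort F w]
    exact hw1
  · intro k
    have hφ := (eq.symm k).2
    refine ⟨fun i => Finset.subset_univ _, ?_, ?_⟩
    · intro i j hij
      rw [Finset.disjoint_left]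
      intro g hi hj
      have h := hitem _ hφ g
      simp only [B, Finset.mem_filter, Finset.mem_univ, true_and] at hi hj
      have h2 := Finset.sum_le_sum_of_subset_of_nonneg (Finset.subset_univ {i, j})
        (f := fun i => (eq.symm k : REdge n m → ℝ) (.inr (.inl (i, g)))) (fun l _ _ => by
          rcases h01 _ hφ l g with h | h <;> simp [h])
      rw [h, Finset.sum_pair hij, hi, hj] at h2
      norm_num at h2
    · intro g _
      by_contra hno
      push Not at hno
      have h := hitem _ hφ g
      rw [Finset.sum_eq_zero (fun i _ => by rw [hval _ hφ, if_neg (hno i)])] at h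
      norm_num at h
  · intro i g
    have h1 : ∀ k, (if g ∈ B (eq.symm k) i then w (eq.symm k) else 0) =
        (fun φ : F => w φ * (φ : REdge n m → ℝ) (.inr (.inl (i, g)))) (eq.symm k) := by
      intro k
      simp only
      rw [hval _ (eq.symm k).2]
      simp
    simp only [h1]
    rw [Equiv.sum_comp eq.symm (fun φ : F => w φ * (φ : REdge n m → ℝ) (.inr (.inl (i, g)))), Finset.sum_coe_sort F (fun φ => w φ * φ (.inr (.inl (i, g))))]
    have := congrFun hwf (.inr (.inl (i, g)))
    simpa [f] using this
  · intro k i g hg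
    simp only [B, Finset.mem_filter, Finset.mem_univ, true_and] at hg
    exact hpos _ (eq.symm k).2 i g hg
  · intro k i
    have hφ := (eq.symm k).2
    have h := (hFp _ hφ).1 (.inr (.inr (.inl i)))
    rw [rcirc_like, hsumB _ hφ] at h
    obtain ⟨_, h1, h2⟩ := (hFp _ hφ).2 (.inr (.inr (.inl i)))
    rw [sub_eq_zero.mp h] at h1 h2
    simp only [f] at h1 h2
    constructor
    · exact_mod_cast h1
    · exact_mod_cast h2
  · intro k i
    have hφ := (eq.symm k).2
    have h := (hFp _ hφ).1 (.inr (.inr (.inl i)))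
    rw [rcirc_like] at h
    have h' := (hFp _ hφ).1 (.inr (.inr (.inr i)))
    rw [rcirc_tot, sub_eq_zero.mp h, sub_sub, sum_like_split L i, hsumB _ hφ, Finset.inter_univ] at h'
    obtain ⟨_, h1, h2⟩ := (hFp _ hφ).2 (.inr (.inr (.inr i)))
    rw [sub_eq_zero.mp h'] at h1 h2
    simp only [f] at h1 h2
    constructor
    · exact_mod_cast h1
    · exact_mod_cast h2


def lev {n m : ℕ} (y : Fin n → Fin m → ℝ) (i : Fin n) : ℝ := ∑ g, y i g

structure Good {n m : ℕ} (c : ℝ) (L : Fin n → Finset (Fin m)) (y : Fin n → Fin m → ℝ) : Prop where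
  nonneg : ∀ i g, 0 ≤ y i g
  supp : ∀ i g, g ∉ L i → y i g = 0
  item : ∀ g, ∑ i, y i g ≤ 1
  cap : ∀ i, lev y i ≤ c
  full : ∀ i, lev y i < c → ∀ g ∈ L i, ∑ k, y k g = 1
  lex : ∀ i, lev y i < c → ∀ g ∈ L i, ∀ j, 0 < y j g → lev y j ≤ lev y i

lemma exists_good {n m : ℕ} (c : ℝ) (hc : 0 ≤ c) (L : Fin n → Finset (Fin m)) :
    ∃ y, Good c L y := by
  classical
  let C : Set (Fin n → Fin m → ℝ) := {y | (∀ i g, 0 ≤ y i g) ∧ (∀ i g, g ∉ L i → y i g = 0) ∧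
    (∀ g, ∑ i, y i g ≤ 1) ∧ ∀ i, lev y i ≤ c}
  have hlevc : ∀ i, Continuous (fun y : Fin n → Fin m → ℝ => lev y i) := by
    intro i; unfold lev; fun_prop
  have hclosed : IsClosed C := by
    simp only [C, Set.ofPred_and, Set.ofPred_forall]
    refine IsClosed.inter ?_ (IsClosed.inter ?_ (IsClosed.inter ?_ ?_))
    · exact isClosed_iInter fun i => isClosed_iInter fun g => isClosed_le (by fun_prop) (by fun_prop)
    · exact isClosed_iInter fun i => isClosed_iInter fun g => isClosed_iInter fun _ =>
        isClosed_eq (by fun_prop) (by fun_prop)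
    · exact isClosed_iInter fun i => isClosed_le (by fun_prop) (by fun_prop)
    · exact isClosed_iInter fun i => isClosed_le (hlevc i) (by fun_prop)
  have hcomp : IsCompact C := by
    refine IsCompact.of_isClosed_subset (isCompact_Icc (a := (fun _ _ => 0 : Fin n → Fin m → ℝ))
      (b := fun _ _ => 1)) hclosed ?_
    rintro y ⟨h1, _, h3, _⟩
    refine ⟨fun i g => h1 i g, fun i g => ?_⟩
    exact (Finset.single_le_sum (f := fun i => y i g) (fun i _ => h1 i g) (Finset.mem_univ i)).trans (h3 g)
  have hne : C.Nonempty := ⟨0, by simp [C, lev, hc]⟩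
  obtain ⟨y, hyC, hmin⟩ := hcomp.exists_isMinOn hne
    (f := fun y => ∑ i, (c - lev y i) ^ 2) (by
      apply Continuous.continuousOn
      exact continuous_finsetSum _ fun i _ => (continuous_const.sub (hlevc i)).pow 2)
  rw [isMinOn_iff] at hmin
  obtain ⟨h1, h2, h3, h4⟩ := hyC
  refine ⟨y, h1, h2, h3, h4, ?_, ?_⟩
  · intro i hi g hg
    by_contra hne1
    have hlt := lt_of_le_of_ne (h3 g) hne1
    set ε := min (1 - ∑ k, y k g) (c - lev y i) with hε
    have hε0 : 0 < ε := lt_min (by linarith) (by linarith)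
    have hε1 : ε ≤ 1 - ∑ k, y k g := min_le_left _ _
    have hε2 : ε ≤ c - lev y i := min_le_right _ _
    let z : Fin n → Fin m → ℝ := fun k h => y k h + if k = i then (if h = g then ε else 0) else 0
    have hlev : ∀ k, lev z k = lev y k + if k = i then ε else 0 := by
      intro k
      simp only [lev, z, Finset.sum_add_distrib]
      split_ifs <;> simp
    have hz : z ∈ C := by
      refine ⟨?_, ?_, ?_, ?_⟩
      · intro k h
        have := h1 k h
        simp only [z]
        split_ifs <;> linarith
      · intro k h hk
        simp only [z, h2 k h hk]
        split_ifs with h5 h6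
        · subst h5 h6; exact absurd hg hk
        · simp
        · simp
      · intro h
        simp only [z, Finset.sum_add_distrib, Finset.sum_ite_eq', Finset.mem_univ, if_true]
        split_ifs with h5
        · subst h5; linarith
        · have := h3 h; linarith
      · intro k
        rw [hlev]
        split_ifs with h5
        · subst h5; linarith
        · have := h4 k; linarith
    have := hmin z hz
    refine absurd this (not_le.mpr ?_)
    apply Finset.sum_lt_sum
    · intro k _
      rw [hlev]
      split_ifs with h5
      · subst h5; nlinarith
      · simp
    · refine ⟨i, Finset.mem_univ _, ?_⟩
      rw [hlev]
      simp only [if_true]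
      nlinarith
  · intro i hi g hg j hj
    by_contra hlt
    push Not at hlt
    have hij : i ≠ j := by rintro rfl; exact lt_irrefl _ hlt
    set ε := min (y j g) ((lev y j - lev y i) / 2) with hε
    have hε0 : 0 < ε := lt_min hj (by linarith)
    have hε1 : ε ≤ y j g := min_le_left _ _
    have hε2 : ε ≤ (lev y j - lev y i) / 2 := min_le_right _ _
    let z : Fin n → Fin m → ℝ := fun k h => y k h + (if k = i then (if h = g then ε else 0) else 0)
      - (if k = j then (if h = g then ε else 0) else 0)
    have hlev : ∀ k, lev z k = lev y k + (if k = i then ε else 0) - (if k = j then ε else 0) := by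
      intro k
      simp only [lev, z, Finset.sum_add_distrib, Finset.sum_sub_distrib]
      split_ifs <;> simp
    have hcj := h4 j
    have hjg : g ∈ L j := by
      by_contra hn
      rw [h2 j g hn] at hj
      exact lt_irrefl _ hj
    have hz : z ∈ C := by
      refine ⟨?_, ?_, ?_, ?_⟩
      · intro k h
        have := h1 k h
        simp only [z]
        split_ifs with h5 h6 h7 h8 h9 h10
        all_goals first | linarith | (subst_vars; linarith)
      · intro k h hk
        simp only [z, h2 k h hk]
        split_ifs with h5 h6 h7 h8 h9 h10
        all_goals first | (simp; done) | (subst_vars; contradiction)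
      · intro h
        simp only [z, Finset.sum_add_distrib, Finset.sum_sub_distrib, Finset.sum_ite_eq',
          Finset.mem_univ, if_true]
        have := h3 h; linarith
      · intro k
        rw [hlev]
        have := h4 k
        split_ifs with h5 h6
        all_goals first | linarith | (subst_vars; linarith)
    have hm := hmin z hz
    refine absurd hm (not_le.mpr ?_)
    have : ∀ k, (c - lev z k) ^ 2 = (c - lev y k) ^ 2 +
        (if k = i then (c - lev y i - ε) ^ 2 - (c - lev y i) ^ 2 else 0) +
        (if k = j then (c - lev y j + ε) ^ 2 - (c - lev y j) ^ 2 else 0) := by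
      intro k
      rw [hlev]
      split_ifs with h5 h6 h6
      · exact absurd (h5.symm.trans h6) hij
      · subst h5; ring
      · subst h6; ring
      · ring
    simp only [this, Finset.sum_add_distrib, Finset.sum_ite_eq', Finset.mem_univ, if_true]
    nlinarith


noncomputable def fill {n m : ℕ} (c : ℝ) (y : Fin n → Fin m → ℝ) (i : Fin n) (g : Fin m) : ℝ :=
  y i g + (c - lev y i) / (∑ k, (c - lev y k)) * (1 - ∑ k, y k g)

lemma Good.lev_eq {n m : ℕ} {c : ℝ} {L : Fin n → Finset (Fin m)} {y : Fin n → Fin m → ℝ}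
    (h : Good c L y) (i : Fin n) : ∑ g ∈ L i, y i g = lev y i := by
  unfold lev
  exact Finset.sum_subset (Finset.subset_univ _) (fun g _ hg => h.supp i g hg)

lemma Good.hall {n m : ℕ} {c : ℝ} {L : Fin n → Finset (Fin m)} {y : Fin n → Fin m → ℝ}
    (h : Good c L y) (W : Finset (Fin n)) (hW : ∀ k ∈ W, lev y k < c)
    (hdown : ∀ k ∈ W, ∀ j, lev y j ≤ lev y k → j ∈ W)
    (z : Fin n → Fin m → ℝ) (hz0 : ∀ i g, 0 ≤ z i g) (hz1 : ∀ g, ∑ i, z i g ≤ 1) :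
    ∑ k ∈ W, ∑ g ∈ L k, z k g ≤ ∑ k ∈ W, lev y k := by
  classical
  let N := W.biUnion L
  have h1 : ∑ k ∈ W, ∑ g ∈ L k, z k g ≤ ∑ k ∈ W, ∑ g ∈ N, z k g := by
    apply Finset.sum_le_sum
    intro k hk
    exact Finset.sum_le_sum_of_subset_of_nonneg (Finset.subset_biUnion_of_mem L hk)
      (fun g _ _ => hz0 k g)
  have h2 : ∑ k ∈ W, ∑ g ∈ N, z k g ≤ ∑ g ∈ N, (1:ℝ) := by
    rw [Finset.sum_comm]
    apply Finset.sum_le_sum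
    intro g _
    exact (Finset.sum_le_sum_of_subset_of_nonneg (Finset.subset_univ W)
      (fun k _ _ => hz0 k g)).trans (hz1 g)
  have h3 : ∑ g ∈ N, (1:ℝ) = ∑ g ∈ N, ∑ k ∈ W, y k g := by
    apply Finset.sum_congr rfl
    intro g hg
    obtain ⟨k, hk, hgk⟩ := Finset.mem_biUnion.mp hg
    rw [← h.full k (hW k hk) g hgk]
    symm
    apply Finset.sum_subset (Finset.subset_univ _)
    intro j _ hj
    by_contra hne
    exact hj (hdown k hk j (h.lex k (hW k hk) g hgk j (lt_of_le_of_ne (h.nonneg j g) (Ne.symm hne))))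
  have h4 : ∑ g ∈ N, ∑ k ∈ W, y k g ≤ ∑ k ∈ W, lev y k := by
    rw [Finset.sum_comm]
    apply Finset.sum_le_sum
    intro k _
    exact Finset.sum_le_sum_of_subset_of_nonneg (Finset.subset_univ _) (fun g _ _ => h.nonneg k g)
  linarith

section fillfacts
variable {n m : ℕ} {c : ℝ} {L : Fin n → Finset (Fin m)} {y : Fin n → Fin m → ℝ}

lemma Good.R_nonneg (h : Good c L y) : 0 ≤ ∑ k, (c - lev y k) :=
  Finset.sum_nonneg fun k _ => sub_nonneg.mpr (h.cap k)

lemma Good.rho_nonneg (h : Good c L y) (i : Fin n) : 0 ≤ (c - lev y i) / ∑ k, (c - lev y k) :=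
  div_nonneg (sub_nonneg.mpr (h.cap i)) h.R_nonneg

lemma Good.le_fill (h : Good c L y) (i : Fin n) (g : Fin m) : y i g ≤ fill c y i g := by
  have := mul_nonneg (h.rho_nonneg i) (sub_nonneg.mpr (h.item g))
  unfold fill; linarith

lemma Good.fill_nonneg (h : Good c L y) (i : Fin n) (g : Fin m) : 0 ≤ fill c y i g :=
  (h.nonneg i g).trans (h.le_fill i g)

lemma sum_left (y : Fin n → Fin m → ℝ) : ∑ g, (1 - ∑ k, y k g) = m - ∑ k, lev y k := by
  unfold lev
  rw [Finset.sum_sub_distrib, Finset.sum_comm]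
  simp

lemma Good.fill_sum (h : Good c L y) (hnc : (m:ℝ) ≤ n * c) (g : Fin m) :
    ∑ i, fill c y i g = 1 := by
  unfold fill
  rw [Finset.sum_add_distrib, ← Finset.sum_mul, ← Finset.sum_div]
  by_cases hR : ∑ k, (c - lev y k) = 0
  · have h1 := sum_left y
    have h2 : ∑ g, (1 - ∑ k, y k g) = 0 := by
      apply le_antisymm _ (Finset.sum_nonneg fun g _ => sub_nonneg.mpr (h.item g))
      rw [Finset.sum_sub_distrib] at hR
      simp at hR
      linarith
    have h3 := (Finset.sum_eq_zero_iff_of_nonneg (fun g _ => sub_nonneg.mpr (h.item g))).mp h2 g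
      (Finset.mem_univ g)
    rw [h3]; linarith
  · rw [div_self hR]; ring

lemma Good.fill_tot (h : Good c L y) (hnc : (m:ℝ) ≤ n * c) (i : Fin n) :
    ∑ g, fill c y i g ≤ c := by
  unfold fill
  rw [Finset.sum_add_distrib, ← Finset.mul_sum, sum_left]
  change lev y i + _ ≤ c
  have hc := h.cap i
  by_cases hR : ∑ k, (c - lev y k) = 0
  · rw [hR]; simpa using hc
  · have hR' := lt_of_le_of_ne h.R_nonneg (Ne.symm hR)
    have h1 : (m:ℝ) - ∑ k, lev y k ≤ ∑ k, (c - lev y k) := by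
      rw [Finset.sum_sub_distrib]; simp; linarith
    have h2 := mul_le_mul_of_nonneg_left h1 (h.rho_nonneg i)
    rw [div_mul_cancel₀ _ hR] at h2
    linarith

lemma Good.fill_like (h : Good c L y) (i : Fin n) : ∑ g ∈ L i, fill c y i g = lev y i := by
  rw [← h.lev_eq i]
  apply Finset.sum_congr rfl
  intro g hg
  unfold fill
  rcases lt_or_eq_of_le (h.cap i) with hlt | heq
  · rw [h.full i hlt g hg]; simp
  · rw [heq]; simp

/-- the key ownership property -/
lemma Good.owner (h : Good c L y) (i j : Fin n) (g : Fin m) (hi : lev y i < c) (hg : g ∈ L i)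
    (hx : 0 < fill c y j g) : g ∈ L j ∧ lev y j ≤ lev y i := by
  unfold fill at hx
  rw [h.full i hi g hg] at hx
  simp only [sub_self, mul_zero, add_zero] at hx
  refine ⟨?_, h.lex i hi g hg j hx⟩
  by_contra hn
  rw [h.supp j g hn] at hx
  exact lt_irrefl _ hx

lemma Good.truth (h : Good c L y) (hnc : (m:ℝ) ≤ n * c) (i : Fin n)
    {L' : Fin n → Finset (Fin m)} {y' : Fin n → Fin m → ℝ} (h' : Good c L' y')
    (hL : ∀ k, k ≠ i → L' k = L k) :
    ∑ g ∈ L i, fill c y' i g ≤ ∑ g ∈ L i, fill c y i g := by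
  classical
  rw [h.fill_like]
  rcases lt_or_eq_of_le (h.cap i) with htc | htc
  swap
  · rw [htc]
    exact (Finset.sum_le_sum_of_subset_of_nonneg (Finset.subset_univ _)
      (fun g _ _ => h'.fill_nonneg i g)).trans (h'.fill_tot hnc i)
  -- crossing lemma data
  have hW : ∀ θ, θ ≤ c → ∀ z : Fin n → Fin m → ℝ, (∀ i g, 0 ≤ z i g) → (∀ g, ∑ i, z i g ≤ 1) →
      ∑ k, (if lev y k < θ then (∑ g ∈ L k, z k g) - lev y k else 0) ≤ 0 := by
    intro θ hθ z hz0 hz1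
    have := h.hall (Finset.univ.filter fun k => lev y k < θ)
      (fun k hk => by simp at hk; linarith)
      (fun k hk j hj => by simp at hk ⊢; linarith) z hz0 hz1
    rw [← Finset.sum_filter, Finset.sum_sub_distrib]
    linarith
  have hW' : ∀ θ, θ ≤ lev y' i →
      ∑ k, (if lev y' k < θ then lev y k - lev y' k else 0) ≤ 0 := by
    intro θ hθ
    have hc := h'.cap i
    have := h'.hall (Finset.univ.filter fun k => lev y' k < θ)
      (fun k hk => by simp at hk; linarith)
      (fun k hk j hj => by simp at hk ⊢; linarith) y h.nonneg h.item
    rw [← Finset.sum_filter, Finset.sum_sub_distrib]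
    have h2 : ∑ k ∈ (Finset.univ.filter fun k => lev y' k < θ), ∑ g ∈ L' k, y k g
        = ∑ k ∈ (Finset.univ.filter fun k => lev y' k < θ), lev y k := by
      apply Finset.sum_congr rfl
      intro k hk
      have hki : k ≠ i := by
        rintro rfl
        simp at hk; linarith
      rw [hL k hki, h.lev_eq]
    linarith
  have hlev' : ∀ k, k ≠ i → ∑ g ∈ L k, y' k g = lev y' k := by
    intro k hk
    rw [← hL k hk, h'.lev_eq]
  by_cases hcase : lev y i < lev y' i
  · have h1 := hW (lev y' i) (h'.cap i) (fill c y') h'.fill_nonneg (fun g => (h'.fill_sum hnc g).le)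
    have h2 := hW' (lev y' i) le_rfl
    have h3 := add_le_add h1 h2
    rw [← Finset.sum_add_distrib] at h3
    have h4 := Finset.single_le_sum (s := Finset.univ) (a := i) (f := fun k =>
      (if lev y k < lev y' i then (∑ g ∈ L k, fill c y' k g) - lev y k else 0)
       + (if lev y' k < lev y' i then lev y k - lev y' k else 0) + if k = i then
        (lev y i - ∑ g ∈ L i, fill c y' i g) + |lev y i - ∑ g ∈ L i, fill c y' i g| else 0) (by
        intro k _
        by_cases hk : k = i
        · subst hk
          simp only [if_true, hcase, lt_irrefl, if_false]
          have := abs_nonneg (lev y k - ∑ g ∈ L k, fill c y' k g)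
          linarith
        · have h5 : lev y' k ≤ ∑ g ∈ L k, fill c y' k g := by
            rw [← hlev' k hk]
            exact Finset.sum_le_sum fun g _ => h'.le_fill k g
          simp only [hk, if_false]
          split_ifs <;> linarith) (Finset.mem_univ i)
    rw [Finset.sum_add_distrib] at h4
    simp only [if_true, hcase, lt_irrefl, if_false, Finset.sum_ite_eq', Finset.mem_univ] at h4
    linarith
  · push Not at hcase
    -- no loser below level of i
    have hnc2 : ∀ k, k ≠ i → lev y' k < lev y k → lev y' i ≤ lev y' k := by
      intro k hk hlose
      by_contra hlt
      push Not at hlt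
      set θ := min (lev y' i) (lev y k) with hθ
      have hθ1 : θ ≤ lev y' i := min_le_left _ _
      have hθ2 : θ ≤ lev y k := min_le_right _ _
      have hθ3 : lev y' k < θ := lt_min hlt hlose
      have h1 := hW θ (by linarith) y' h'.nonneg h'.item
      have h2 := hW' θ hθ1
      have h3 := add_le_add h1 h2
      rw [← Finset.sum_add_distrib] at h3
      have h4 := Finset.single_le_sum (s := Finset.univ) (a := k) (f := fun k =>
        (if lev y k < θ then (∑ g ∈ L k, y' k g) - lev y k else 0)
         + (if lev y' k < θ then lev y k - lev y' k else 0)) (by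
          intro k _
          by_cases hk : k = i
          · subst hk
            rw [if_neg (by linarith), if_neg (by linarith)]; simp
          · rw [hlev' k hk]
            split_ifs <;> linarith) (Finset.mem_univ k)
      rw [if_neg (by linarith), if_pos hθ3] at h4
      linarith
    set w := ∑ g ∈ L i, y' i g with hw
    set δ := ∑ g ∈ L i, (1 - ∑ k, y' k g) with hδ
    set R := ∑ k, (c - lev y' k) with hR
    have hU : ∑ g ∈ L i, fill c y' i g = w + (c - lev y' i) / R * δ := by
      unfold fill
      rw [Finset.sum_add_distrib, ← Finset.mul_sum]
    have hwle : w ≤ lev y' i :=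
      Finset.sum_le_sum_of_subset_of_nonneg (Finset.subset_univ _) (fun g _ _ => h'.nonneg i g)
    -- the extended allocation
    let z : Fin n → Fin m → ℝ := fun k g => y' k g + if k = i then 1 - ∑ k, y' k g else 0
    have hz := h.hall (Finset.univ.filter fun k => lev y k ≤ lev y i)
      (fun k hk => by simp at hk; linarith)
      (fun k hk j hj => by simp at hk ⊢; linarith) z
      (fun k g => by
        have h1 := h'.nonneg k g
        have h2 := h'.item g
        simp only [z]
        split_ifs <;> linarith)
      (fun g => by
        simp only [z, Finset.sum_add_distrib, Finset.sum_ite_eq', Finset.mem_univ, if_true]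
        linarith)
    set S := Finset.univ.filter fun k => lev y k ≤ lev y i with hS
    have hiS : i ∈ S := by simp [hS]
    rw [← Finset.add_sum_erase S _ hiS, ← Finset.add_sum_erase S (fun k => lev y k) hiS] at hz
    have hzi : ∑ g ∈ L i, z i g = w + δ := by
      simp only [z, if_true, Finset.sum_add_distrib]; rfl
    have hzk : ∑ k ∈ S.erase i, ∑ g ∈ L k, z k g = ∑ k ∈ S.erase i, lev y' k := by
      apply Finset.sum_congr rfl
      intro k hk
      have hki := Finset.ne_of_mem_erase hk
      simp only [z, hki, if_false, add_zero]
      exact hlev' k hki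
    rw [hzi, hzk] at hz
    set P := (S.erase i).filter fun k => lev y' k < lev y k with hP
    have hPk : ∀ k ∈ P, lev y k ≤ lev y i ∧ k ≠ i ∧ lev y' k < lev y k := by
      intro k hk
      simp [hP, hS] at hk
      exact ⟨hk.1.2, hk.1.1, hk.2⟩
    set Λ := ∑ k ∈ P, (lev y k - lev y' k) with hΛ
    have hΛ0 : 0 ≤ Λ := Finset.sum_nonneg fun k hk => by linarith [(hPk k hk).2.2]
    have hΛ1 : ∑ k ∈ S.erase i, (lev y k - lev y' k) ≤ Λ := by
      rw [hΛ, hP, Finset.sum_filter]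
      apply Finset.sum_le_sum
      intro k _
      split_ifs <;> linarith
    rw [Finset.sum_sub_distrib] at hΛ1
    have hΛ2 : Λ ≤ P.card * (lev y i - w) := by
      rw [← nsmul_eq_mul]
      apply Finset.sum_le_card_nsmul
      intro k hk
      obtain ⟨a1, a2, a3⟩ := hPk k hk
      have := hnc2 k a2 a3
      linarith
    have hRge : (c - lev y' i) + (Λ + P.card * (c - lev y i)) ≤ R := by
      rw [hR, ← Finset.add_sum_erase Finset.univ _ (Finset.mem_univ i)]
      have h1 : ∑ k ∈ P, (c - lev y' k) ≤ ∑ k ∈ Finset.univ.erase i, (c - lev y' k) := by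
        apply Finset.sum_le_sum_of_subset_of_nonneg
        · intro k hk
          simp [(hPk k hk).2.1]
        · intro k _ _
          exact sub_nonneg.mpr (h'.cap k)
      have h2 : P.card * (c - lev y i) ≤ ∑ k ∈ P, (c - lev y k) := by
        rw [← nsmul_eq_mul]
        apply Finset.card_nsmul_le_sum
        intro k hk
        linarith [(hPk k hk).1]
      have h3 : ∑ k ∈ P, (c - lev y' k) = Λ + ∑ k ∈ P, (c - lev y k) := by
        rw [hΛ, ← Finset.sum_add_distrib]
        apply Finset.sum_congr rfl
        intro k _; ring
      linarith
    have hN : (0:ℝ) ≤ P.card := Nat.cast_nonneg _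
    have hA : 0 < c - lev y' i := by linarith
    have hRpos : 0 < R := by
      have := mul_nonneg hN (by linarith : 0 ≤ c - lev y i)
      linarith
    have hB : 0 ≤ lev y i - w := by linarith
    have hfin : (c - lev y' i) * δ ≤ (lev y i - w) * R := by
      have e1 := mul_le_mul_of_nonneg_left hRge hB
      have e2 := mul_le_mul_of_nonneg_right hΛ2 (by linarith : 0 ≤ c - lev y i)
      have e3 : (δ - (lev y i - w)) * (c - lev y' i) ≤ Λ * (c - lev y' i) :=
        mul_le_mul_of_nonneg_right (by linarith) hA.le
      have e4 : Λ * (c - lev y' i) ≤ Λ * (c - w) := mul_le_mul_of_nonneg_left (by linarith) hΛ0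
      nlinarith
    rw [hU, div_mul_eq_mul_div]
    have : (c - lev y' i) * δ / R ≤ lev y i - w := by
      rw [div_le_iff₀ hRpos]; exact hfin
    linarith
end fillfacts


lemma po_of_weights {n m : ℕ} (v x : Fin n → Fin m → ℝ) (hx0 : ∀ i g, 0 ≤ x i g)
    (hx1 : ∀ g, ∑ i, x i g = 1)
    (w : Fin n → ℝ) (hw : ∀ i, 0 < w i)
    (h : ∀ j g, 0 < x j g → ∀ k, w k * v k g ≤ w j * v j g) : FracParetoOptimal v x := by
  rintro ⟨y, hy0, hy1, hle, i, hlt⟩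
  have h1 : ∑ i, w i * ∑ g, v i g * x i g < ∑ i, w i * ∑ g, v i g * y i g := by
    apply Finset.sum_lt_sum
    · intro k _
      exact mul_le_mul_of_nonneg_left (hle k) (hw k).le
    · exact ⟨i, Finset.mem_univ _, mul_lt_mul_of_pos_left hlt (hw i)⟩
  refine absurd h1 (not_lt.mpr ?_)
  simp only [Finset.mul_sum]
  rw [Finset.sum_comm, Finset.sum_comm (γ := Fin n)]
  apply Finset.sum_le_sum
  intro g _
  -- there is an owner
  obtain ⟨j, hj⟩ : ∃ j, 0 < x j g := by
    by_contra hno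
    push Not at hno
    have := hx1 g
    have h2 : ∑ i, x i g ≤ 0 := Finset.sum_nonpos fun i _ => hno i
    linarith
  have hM : ∀ k, w k * v k g ≤ w j * v j g := h j g hj
  have hx : ∑ i, w i * (v i g * x i g) = w j * v j g := by
    have : ∀ i, w i * (v i g * x i g) = w j * v j g * x i g := by
      intro k
      rcases lt_or_eq_of_le (hx0 k g) with h3 | h3
      · have := le_antisymm (hM k) (h k g h3 j)
        rw [← this]; ring
      · rw [← h3]; ring
    simp only [this]
    rw [← Finset.mul_sum, hx1, mul_one]
  rw [hx]
  calc ∑ i, w i * (v i g * y i g) ≤ ∑ i, w j * v j g * y i g := by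
        apply Finset.sum_le_sum
        intro k _
        have := mul_le_mul_of_nonneg_right (hM k) (hy0 k g)
        linarith
    _ = w j * v j g := by rw [← Finset.mul_sum, hy1, mul_one]

noncomputable def likes {n m : ℕ} (p : ℝ) (val : Fin n → Fin m → ℝ) (i : Fin n) : Finset (Fin m) :=
  Finset.univ.filter fun g => val i g = p

section final
variable {n m : ℕ} {p q c : ℝ} {val y : Fin n → Fin m → ℝ}

lemma val_eq (hpq : q < p) (hv : ∀ i g, val i g = p ∨ val i g = q) (i : Fin n) (g : Fin m) :
    val i g = q + if g ∈ likes p val i then p - q else 0 := by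
  simp only [likes, Finset.mem_filter, Finset.mem_univ, true_and]
  rcases hv i g with h | h
  · simp [h]
  · rw [h, if_neg hpq.ne]; simp

lemma util_eq (hpq : q < p) (hv : ∀ i g, val i g = p ∨ val i g = q) (i : Fin n) (x : Fin m → ℝ) :
    ∑ g, val i g * x g = q * ∑ g, x g + (p - q) * ∑ g ∈ likes p val i, x g := by
  simp only [val_eq hpq hv i, add_mul, Finset.sum_add_distrib, ← Finset.mul_sum, ite_mul, zero_mul,
    Finset.sum_ite_mem, Finset.univ_inter]

lemma bundle_eq (hpq : q < p) (hv : ∀ i g, val i g = p ∨ val i g = q) (i : Fin n)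
    (B : Finset (Fin m)) :
    ∑ g ∈ B, val i g = q * B.card + (p - q) * (B ∩ likes p val i).card := by
  simp only [val_eq hpq hv i, Finset.sum_add_distrib, Finset.sum_ite_mem, Finset.sum_const,
    nsmul_eq_mul]
  ring

lemma tot_eq {L : Fin n → Finset (Fin m)} (h : Good c L y) (hc : n * c = m) (i : Fin n) :
    ∑ g, fill c y i g = c := by
  by_contra hne
  have hlt := lt_of_le_of_ne (h.fill_tot hc.ge i) hne
  have h1 : ∑ i, ∑ g, fill c y i g < ∑ i : Fin n, c :=
    Finset.sum_lt_sum (fun k _ => h.fill_tot hc.ge k) ⟨i, Finset.mem_univ _, hlt⟩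
  rw [Finset.sum_comm] at h1
  simp [h.fill_sum hc.ge] at h1
  linarith

lemma po_final (hq : 0 ≤ q) (hpq : q < p) (hv : ∀ i g, val i g = p ∨ val i g = q)
    (hnc : (m:ℝ) ≤ n * c) (h : Good c (likes p val) y) (hqc : (0 < q ∧ n * c = m) ∨ (q = 0 ∧ c = m)) :
    FracParetoOptimal val (fill c y) := by
  classical
  have hlike : ∀ i g, g ∈ likes p val i → val i g = p := by
    intro i g hg; simpa [likes] using hg
  have hnlike : ∀ i g, g ∉ likes p val i → val i g = q := by
    intro i g hg
    rcases hv i g with h | h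
    · exact absurd (by simpa [likes] using h) hg
    · exact h
  have hvle : ∀ i g, val i g ≤ p := by
    intro i g; rcases hv i g with h | h <;> rw [h]; exact hpq.le
  -- saturated agents own only liked items
  have hsat : ∀ j g, lev y j = c → 0 < fill c y j g → g ∈ likes p val j := by
    intro j g hj hx
    by_contra hn
    have : fill c y j g = 0 := by
      unfold fill
      rw [h.supp j g hn, hj]; simp
    linarith
  rcases hqc with ⟨hq0, hc⟩ | ⟨rfl, hc⟩
  · apply po_of_weights val _ h.fill_nonneg (h.fill_sum hnc) (fun i => if lev y i < c then p else q)
    · intro i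
      split_ifs <;> linarith
    · intro j g hx k
      by_cases hR : ∃ i, lev y i < c ∧ g ∈ likes p val i
      · obtain ⟨i, hi, hg⟩ := hR
        obtain ⟨h1, h2⟩ := h.owner i j g hi hg hx
        rw [if_pos (show lev y j < c by linarith), hlike j g h1]
        have := hvle k g
        have h0 : 0 ≤ val k g := by rcases hv k g with h | h <;> rw [h] <;> linarith
        split_ifs <;> nlinarith
      · push Not at hR
        have h1 : (if lev y k < c then p else q) * val k g ≤ p * q := by
          split_ifs with hk
          · rw [hnlike k g (hR k hk)]
          · rw [mul_comm p q]
            exact mul_le_mul_of_nonneg_left (hvle k g) hq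
        refine h1.trans ?_
        split_ifs with hj
        · rw [hnlike j g (hR j hj)]
        · rw [hlike j g (hsat j g (le_antisymm (h.cap j) (not_lt.mp hj)) hx)]
          linarith
  · apply po_of_weights val _ h.fill_nonneg (h.fill_sum hnc) (fun _ => 1) (fun _ => one_pos)
    intro j g hx k
    rw [one_mul, one_mul]
    by_cases hg : g ∈ likes p val k
    · have hgj : g ∈ likes p val j := by
        rcases lt_or_eq_of_le (h.cap k) with hk | hk
        · exact (h.owner k j g hk hg hx).1
        · by_cases hjk : j = k
          · rw [hjk]; exact hg
          · exfalso
            have hyle : ∀ g', y k g' ≤ 1 := fun g' =>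
              (Finset.single_le_sum (f := fun i => y i g') (fun i _ => h.nonneg i g')
                (Finset.mem_univ k)).trans (h.item g')
            have hyk : y k g = 1 := by
              by_contra hne
              have : lev y k < ∑ g' : Fin m, (1:ℝ) :=
                Finset.sum_lt_sum (fun g' _ => hyle g') ⟨g, Finset.mem_univ _, lt_of_le_of_ne (hyle g) hne⟩
              simp at this
              linarith
            have h2 := h.fill_sum hnc g
            have h3 := Finset.sum_le_sum_of_subset_of_nonneg (Finset.subset_univ {j, k})
              (f := fun i => fill c y i g) (fun l _ _ => h.fill_nonneg l g)
            rw [Finset.sum_pair hjk, h2] at h3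
            have := h.le_fill k g
            linarith
      rw [hlike j g hgj]; exact hvle k g
    · rw [hnlike k g hg]
      rcases hv j g with h | h <;> rw [h]; exact hpq.le

lemma ef1_final (hq : 0 ≤ q) (hpq : q < p) (hv : ∀ i g, val i g = p ∨ val i g = q)
    (hnc : (m:ℝ) ≤ n * c) (h : Good c (likes p val) y) (hqc : q = 0 ∨ n * c = m) :
    EF1Realizable val (fill c y) := by
  classical
  obtain ⟨K, w, A, h1, h2, h3, h4, h5, h6, h7⟩ :=
    rounding (likes p val) (fill c y) h.fill_nonneg (h.fill_sum hnc)
  refine ⟨K, w, A, h1, h2, h3, ?_, h4⟩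
  intro k i j
  simp only [h.fill_like] at h6
  have hcf : ⌈c⌉ ≤ ⌊c⌋ + 1 := Int.ceil_le_floor_add_one c
  have htj : ((A k j).card : ℤ) ≤ ⌈c⌉ := (h7 k j).2.trans (Int.ceil_le_ceil (h.fill_tot hnc j))
  -- size part
  have hsize : ∀ T : Finset (Fin m), T ⊆ A k j → T.card = 1 → q * ((A k j \ T).card : ℝ) ≤ q * (A k i).card := by
    intro T hT hT1
    rcases hqc with h0 | h0
    · simp [h0]
    · apply mul_le_mul_of_nonneg_left _ hq
      have e1 := (h7 k i).1
      rw [tot_eq h h0] at e1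
      have e2 := Finset.card_sdiff_of_subset hT
      have e3 := Finset.card_le_card hT
      have : (A k j \ T).card ≤ (A k i).card := by omega
      exact_mod_cast this
  have key : ∀ T : Finset (Fin m), T ⊆ A k j → T.card = 1 →
      (((A k j \ T) ∩ likes p val i).card ≤ (A k i ∩ likes p val i).card) →
      ∃ Si Sj : Finset (Fin m), Si ⊆ Finset.univ ∧ Disjoint Si (A k i) ∧ Si.card ≤ 0 ∧
      Sj ⊆ A k j ∧ Sj.card ≤ 1 ∧
      ∑ g ∈ A k j \ Sj, val i g ≤ ∑ g ∈ A k i ∪ Si, val i g := by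
    intro T hT hT1 hle
    refine ⟨∅, T, by simp, by simp, by simp, hT, hT1.le, ?_⟩
    rw [Finset.union_empty, bundle_eq hpq hv, bundle_eq hpq hv]
    have e1 := hsize T hT hT1
    have e2 : (((A k j \ T) ∩ likes p val i).card : ℝ) ≤ (A k i ∩ likes p val i).card := by
      exact_mod_cast hle
    have e3 := mul_le_mul_of_nonneg_left e2 (sub_nonneg.mpr hpq.le)
    linarith
  rcases Finset.eq_empty_or_nonempty (A k j) with hem | ⟨g₀, hg₀⟩
  · refine ⟨∅, ∅, by simp, by simp, by simp, by simp, by simp, ?_⟩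
    rw [hem, bundle_eq hpq hv, bundle_eq hpq hv]
    have := sub_nonneg.mpr hpq.le
    simp only [Finset.empty_sdiff, Finset.empty_inter, Finset.card_empty]
    simp only [Nat.cast_zero, mul_zero, add_zero]
    positivity
  rcases Finset.eq_empty_or_nonempty (A k j ∩ likes p val i) with hem | ⟨g, hg⟩
  · apply key {g₀} (by simpa using hg₀) (by simp)
    have : (A k j \ {g₀}) ∩ likes p val i = ∅ := by
      apply Finset.subset_empty.mp
      rw [← hem]
      exact Finset.inter_subset_inter_right Finset.sdiff_subset
    rw [this]; simp
  · have hgA := (Finset.mem_inter.mp hg).1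
    have hgL := (Finset.mem_inter.mp hg).2
    apply key {g} (by simpa using hgA) (by simp)
    have e0 : ((A k j \ {g}) ∩ likes p val i).card + 1 = (A k j ∩ likes p val i).card := by
      have : (A k j \ {g}) ∩ likes p val i = (A k j ∩ likes p val i).erase g := by
        ext a; simp; tauto
      rw [this, Finset.card_erase_add_one hg]
    have e1 := (h6 k i).1
    rcases lt_or_eq_of_le (h.cap i) with hi | hi
    · have hlj := (h.owner i j g hi hgL (h5 k j g hgA)).2
      have e2 : (A k j ∩ likes p val i).card ≤ (A k j ∩ likes p val j).card := by
        apply Finset.card_le_card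
        intro a ha
        have haA := (Finset.mem_inter.mp ha).1
        have haL := (Finset.mem_inter.mp ha).2
        exact Finset.mem_inter.mpr ⟨haA, (h.owner i j a hi haL (h5 k j a haA)).1⟩
      have e3 := (h6 k j).2
      have e4 := Int.ceil_le_ceil hlj
      have e5 := Int.ceil_le_floor_add_one (lev y i)
      omega
    · rw [hi] at e1
      have e2 := Finset.card_le_card (Finset.inter_subset_left : A k j ∩ likes p val i ⊆ A k j)
      omega
end final

/-- For bi-valued valuations (every item worth `p` or `q`, where `p > q ≥ 0`) there is a
fractional allocation rule that is truthful, always Pareto-optimal among fractional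
allocations, and always EF1-realizable. -/
theorem exists_truthful_EF1_PO_rule_bivalued (p q : ℝ) (hq : 0 ≤ q) (hpq : q < p)
    (n m : ℕ) (hn : 1 ≤ n) :
    ∃ F : (Fin n → Fin m → ℝ) → (Fin n → Fin m → ℝ),
      -- F outputs fractional allocations on bi-valued profiles
      (∀ val : Fin n → Fin m → ℝ, (∀ i g, val i g = p ∨ val i g = q) →
        (∀ i g, 0 ≤ F val i g) ∧ (∀ g, ∑ i, F val i g = 1)) ∧
      -- truthfulness on bi-valued profiles
      (∀ val : Fin n → Fin m → ℝ, (∀ i g, val i g = p ∨ val i g = q) →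
        ∀ i : Fin n, ∀ v' : Fin m → ℝ, (∀ g, v' g = p ∨ v' g = q) →
          ∑ g, val i g * F (Function.update val i v') i g ≤
            ∑ g, val i g * F val i g) ∧
      -- Pareto-optimality of the output among fractional allocations
      (∀ val : Fin n → Fin m → ℝ, (∀ i g, val i g = p ∨ val i g = q) →
        FracParetoOptimal val (F val)) ∧
      -- EF1-realizability of the output
      (∀ val : Fin n → Fin m → ℝ, (∀ i g, val i g = p ∨ val i g = q) →
        EF1Realizable val (F val)) := by
  classical
  have hn0 : (0:ℝ) < n := by exact_mod_cast hn
  have hn1 : (1:ℝ) ≤ n := by exact_mod_cast hn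
  have hm0 : (0:ℝ) ≤ m := Nat.cast_nonneg m
  obtain ⟨c, hc0, hqc⟩ : ∃ c : ℝ, 0 ≤ c ∧ ((0 < q ∧ n * c = m) ∨ (q = 0 ∧ c = m)) := by
    rcases lt_or_eq_of_le hq with h | h
    · exact ⟨m / n, by positivity, Or.inl ⟨h, by field_simp⟩⟩
    · exact ⟨m, hm0, Or.inr ⟨h.symm, rfl⟩⟩
  have hnc : (m:ℝ) ≤ n * c := by
    rcases hqc with ⟨_, h⟩ | ⟨_, h⟩
    · exact h.ge
    · rw [h]; nlinarith
  have hqc' : q = 0 ∨ n * c = m := by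
    rcases hqc with ⟨_, h⟩ | ⟨h, _⟩
    · exact Or.inr h
    · exact Or.inl h
  choose Y hY using fun L : Fin n → Finset (Fin m) => exists_good c hc0 L
  refine ⟨fun val => fill c (Y (likes p val)), ?_, ?_, ?_, ?_⟩
  · intro val _
    exact ⟨(hY _).fill_nonneg, (hY _).fill_sum hnc⟩
  · intro val hv i v' hv'
    simp only
    rw [util_eq hpq hv, util_eq hpq hv]
    have h1 : q * ∑ g, fill c (Y (likes p (Function.update val i v'))) i g
        = q * ∑ g, fill c (Y (likes p val)) i g := by
      rcases hqc' with h | h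
      · simp [h]
      · rw [tot_eq (hY _) h, tot_eq (hY _) h]
    have h2 := (hY (likes p val)).truth hnc i (hY (likes p (Function.update val i v'))) (by
      intro k hk
      simp [likes, Function.update_of_ne hk])
    have h3 := mul_le_mul_of_nonneg_left h2 (sub_nonneg.mpr hpq.le)
    linarith
  · intro val hv
    exact po_final hq hpq hv hnc (hY _) hqc
  · intro val hv
    exact ef1_final hq hpq hv hnc (hY _) hqc'
end

section
/- Consider two agents and six items g_1,…,g_6 with additive valuations v_1 = (2,2,1,1,1,1) and v_2 = (1,1,1,1,1,1), and let v'_1 agree with v_1 except that v'_1(g_3) = 2. Then: (i) the unique fractional allocation maximizing the Nash welfare (the product of the two agents' utilities) for the profile (v_1, v_2) is integral and gives agent 1 exactly {g_1, g_2}; (ii) the unique Nash-welfare-maximizing fractional allocation for the profile (v'_1, v_2) is integral and gives agent 1 exactly {g_1, g_2, g_3}; and hence agent 1's true utility is strictly larger under the misreport (5 versus 4), so the maximum Nash welfare rule is not truthful even for bi-valued valuations. -/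
open Finset

/-- A fractional allocation of six items to two agents. -/
def ValidFrac6 (x : Fin 2 → Fin 6 → ℝ) : Prop :=
  (∀ i g, 0 ≤ x i g) ∧ ∀ g, x 0 g + x 1 g = 1

/-- The Nash welfare (product of the two agents' utilities) of a fractional allocation. -/
def NW6 (v1 v2 : Fin 6 → ℝ) (x : Fin 2 → Fin 6 → ℝ) : ℝ :=
  (∑ g, v1 g * x 0 g) * (∑ g, v2 g * x 1 g)

/-- Agent 1's true valuation. -/
def v1true : Fin 6 → ℝ := ![2, 2, 1, 1, 1, 1]

/-- Agent 1's misreport, agreeing with `v1true` except on item `g₃`. -/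
def v1lie : Fin 6 → ℝ := ![2, 2, 2, 1, 1, 1]

/-- Agent 2's valuation. -/
def v2val : Fin 6 → ℝ := fun _ => 1

/-- The integral allocation giving agent 1 exactly `{g₁, g₂}`. -/
def xTruth : Fin 2 → Fin 6 → ℝ := fun i g =>
  if (g : ℕ) < 2 then (if i = 0 then 1 else 0) else (if i = 0 then 0 else 1)

/-- The integral allocation giving agent 1 exactly `{g₁, g₂, g₃}`. -/
def xLie : Fin 2 → Fin 6 → ℝ := fun i g =>
  if (g : ℕ) < 3 then (if i = 0 then 1 else 0) else (if i = 0 then 0 else 1)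

lemma aux_truth (y : Fin 2 → Fin 6 → ℝ) (hy : ValidFrac6 y) :
    NW6 v1true v2val y ≤ 16 ∧ (16 ≤ NW6 v1true v2val y → y = xTruth) := by
  obtain ⟨h0, h1⟩ := hy
  have e : NW6 v1true v2val y =
      (2 * (y 0 0 + y 0 1) + (y 0 2 + y 0 3 + y 0 4 + y 0 5)) *
      (6 - (y 0 0 + y 0 1) - (y 0 2 + y 0 3 + y 0 4 + y 0 5)) := by
    have k : ∀ g, y 1 g = 1 - y 0 g := fun g => by linarith [h1 g]
    simp only [NW6, v1true, v2val, Fin.sum_univ_six, k]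
    simp
    ring
  have p : ∀ g, 0 ≤ y 0 g := h0 0
  have q : ∀ g, y 0 g ≤ 1 := fun g => by linarith [h0 1 g, h1 g]
  obtain ⟨A, hA⟩ : ∃ A, A = y 0 0 + y 0 1 := ⟨_, rfl⟩
  obtain ⟨B, hB⟩ : ∃ B, B = y 0 2 + y 0 3 + y 0 4 + y 0 5 := ⟨_, rfl⟩
  rw [e, ← hA, ← hB]
  have a0 : 0 ≤ A := by linarith [p 0, p 1]
  have a2 : A ≤ 2 := by linarith [q 0, q 1]
  have b0 : 0 ≤ B := by linarith [p 2, p 3, p 4, p 5]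
  have key : 4 * ((2 * A + B) * (6 - A - B)) = (6 + A) ^ 2 - (3 * A + 2 * B - 6) ^ 2 := by ring
  refine ⟨by nlinarith [sq_nonneg (3 * A + 2 * B - 6)], fun h => ?_⟩
  have hA2 : A = 2 := by nlinarith [sq_nonneg (3 * A + 2 * B - 6)]
  have hB0 : B = 0 := by subst hA2; nlinarith
  have z0 : y 0 0 = 1 := by linarith [q 0, q 1]
  have z1 : y 0 1 = 1 := by linarith [q 0, q 1]
  have z2 : y 0 2 = 0 := by linarith [p 2, p 3, p 4, p 5]
  have z3 : y 0 3 = 0 := by linarith [p 2, p 3, p 4, p 5]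
  have z4 : y 0 4 = 0 := by linarith [p 2, p 3, p 4, p 5]
  have z5 : y 0 5 = 0 := by linarith [p 2, p 3, p 4, p 5]
  have k : ∀ g, y 1 g = 1 - y 0 g := fun g => by linarith [h1 g]
  funext i g
  fin_cases i <;> fin_cases g <;> simp [xTruth, k, z0, z1, z2, z3, z4, z5]

lemma aux_lie (y : Fin 2 → Fin 6 → ℝ) (hy : ValidFrac6 y) :
    NW6 v1lie v2val y ≤ 18 ∧ (18 ≤ NW6 v1lie v2val y → y = xLie) := by
  obtain ⟨h0, h1⟩ := hy
  have e : NW6 v1lie v2val y =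
      (2 * (y 0 0 + y 0 1 + y 0 2) + (y 0 3 + y 0 4 + y 0 5)) *
      (6 - (y 0 0 + y 0 1 + y 0 2) - (y 0 3 + y 0 4 + y 0 5)) := by
    have k : ∀ g, y 1 g = 1 - y 0 g := fun g => by linarith [h1 g]
    simp only [NW6, v1lie, v2val, Fin.sum_univ_six, k]
    simp
    ring
  have p : ∀ g, 0 ≤ y 0 g := h0 0
  have q : ∀ g, y 0 g ≤ 1 := fun g => by linarith [h0 1 g, h1 g]
  obtain ⟨A, hA⟩ : ∃ A, A = y 0 0 + y 0 1 + y 0 2 := ⟨_, rfl⟩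
  obtain ⟨B, hB⟩ : ∃ B, B = y 0 3 + y 0 4 + y 0 5 := ⟨_, rfl⟩
  rw [e, ← hA, ← hB]
  have a0 : 0 ≤ A := by linarith [p 0, p 1, p 2]
  have a3 : A ≤ 3 := by linarith [q 0, q 1, q 2]
  have b0 : 0 ≤ B := by linarith [p 3, p 4, p 5]
  have b3 : B ≤ 3 := by linarith [q 3, q 4, q 5]
  have key : 8 * ((2 * A + B) * (6 - A - B)) = (12 - B) ^ 2 - (4 * A + 3 * B - 12) ^ 2 := by ring
  refine ⟨by nlinarith [sq_nonneg (4 * A + 3 * B - 12)], fun h => ?_⟩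
  have hB0 : B = 0 := by nlinarith [sq_nonneg (4 * A + 3 * B - 12)]
  have hA3 : A = 3 := by
    subst hB0
    have : (A - 3) ^ 2 = 0 := le_antisymm (by nlinarith) (sq_nonneg _)
    have := pow_eq_zero_iff (two_ne_zero) |>.1 this
    linarith
  have z0 : y 0 0 = 1 := by linarith [q 0, q 1, q 2]
  have z1 : y 0 1 = 1 := by linarith [q 0, q 1, q 2]
  have z2 : y 0 2 = 1 := by linarith [q 0, q 1, q 2]
  have z3 : y 0 3 = 0 := by linarith [p 3, p 4, p 5]
  have z4 : y 0 4 = 0 := by linarith [p 3, p 4, p 5]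
  have z5 : y 0 5 = 0 := by linarith [p 3, p 4, p 5]
  have k : ∀ g, y 1 g = 1 - y 0 g := fun g => by linarith [h1 g]
  funext i g
  fin_cases i <;> fin_cases g <;> simp [xLie, k, z0, z1, z2, z3, z4, z5]

/-- For the profile `(v1true, v2val)` the unique Nash-welfare-maximizing fractional
allocation is the integral allocation giving agent 1 exactly `{g₁,g₂}`; for the misreported
profile `(v1lie, v2val)` the unique maximizer gives agent 1 exactly `{g₁,g₂,g₃}`; and agent
1's true utility is strictly larger under the misreport.  Hence the maximum Nash welfare
rule is not truthful even for bi-valued valuations. -/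
theorem MNW_not_truthful_bivalued :
    (ValidFrac6 xTruth ∧
      (∀ y, ValidFrac6 y → NW6 v1true v2val y ≤ NW6 v1true v2val xTruth) ∧
      (∀ x, ValidFrac6 x →
        (∀ y, ValidFrac6 y → NW6 v1true v2val y ≤ NW6 v1true v2val x) → x = xTruth)) ∧
    (ValidFrac6 xLie ∧
      (∀ y, ValidFrac6 y → NW6 v1lie v2val y ≤ NW6 v1lie v2val xLie) ∧
      (∀ x, ValidFrac6 x →
        (∀ y, ValidFrac6 y → NW6 v1lie v2val y ≤ NW6 v1lie v2val x) → x = xLie)) ∧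
    (∑ g, v1true g * xTruth 0 g < ∑ g, v1true g * xLie 0 g) := by
  have t : NW6 v1true v2val xTruth = 16 := by
    simp [NW6, v1true, v2val, xTruth, Fin.sum_univ_six]; norm_num
  have l : NW6 v1lie v2val xLie = 18 := by
    simp [NW6, v1lie, v2val, xLie, Fin.sum_univ_six]; norm_num
  have vt : ValidFrac6 xTruth := by
    constructor
    · intro i g; unfold xTruth; split_ifs <;> norm_num
    · intro g; unfold xTruth; split_ifs <;> simp_all
  have vl : ValidFrac6 xLie := by
    constructor
    · intro i g; unfold xLie; split_ifs <;> norm_num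
    · intro g; unfold xLie; split_ifs <;> simp_all
  refine ⟨⟨vt, fun y hy => t ▸ (aux_truth y hy).1,
    fun x hx h => (aux_truth x hx).2 (t ▸ h _ vt)⟩,
    ⟨vl, fun y hy => l ▸ (aux_lie y hy).1,
    fun x hx h => (aux_lie x hx).2 (l ▸ h _ vl)⟩, ?_⟩
  simp [v1true, xTruth, xLie, Fin.sum_univ_six]
end

section
/- Let S be a finite set of even cardinality, and let P and Q be two partitions of S into 2-element sets. Then there exists a subset X ⊆ S containing exactly one element of every pair of P and exactly one element of every pair of Q. -/
open Finset

theorem pair_involution {α : Type*} [DecidableEq α] (P : Finset (Finset α))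
    (hP2 : ∀ B ∈ P, B.card = 2)
    (hPdisj : ∀ B ∈ P, ∀ C ∈ P, B ≠ C → Disjoint B C)
    (hPcov : ∀ x : α, ∃ B ∈ P, x ∈ B) :
    ∃ p : Equiv.Perm α, (∀ x, p x ≠ x) ∧ (∀ x, p (p x) = x) ∧
      ∀ B ∈ P, ∃ x, B = {x, p x} := by
  have h1 : ∀ x : α, ∃ y, y ≠ x ∧ ({x, y} : Finset α) ∈ P := by
    intro x
    obtain ⟨B, hB, hx⟩ := hPcov x
    obtain ⟨a, b, hab, rfl⟩ := Finset.card_eq_two.1 (hP2 B hB)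
    simp only [Finset.mem_insert, Finset.mem_singleton] at hx
    rcases hx with rfl | rfl
    · exact ⟨b, hab.symm, hB⟩
    · exact ⟨a, hab, by rwa [Finset.pair_comm]⟩
  choose p hp hpP using h1
  have huniq : ∀ x y, y ≠ x → ({x, y} : Finset α) ∈ P → y = p x := by
    intro x y hy hyP
    have heq : ({x, y} : Finset α) = {x, p x} := by
      by_contra hne
      exact Finset.disjoint_left.1 (hPdisj _ hyP _ (hpP x) hne)
        (Finset.mem_insert_self x _) (Finset.mem_insert_self x _)
    have hmem : y ∈ ({x, p x} : Finset α) := by rw [← heq]; simp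
    simp only [Finset.mem_insert, Finset.mem_singleton] at hmem
    exact hmem.resolve_left hy
  have hinv : ∀ x, p (p x) = x := fun x =>
    (huniq (p x) x (hp x).symm (by rw [Finset.pair_comm]; exact hpP x)).symm
  refine ⟨⟨p, p, hinv, hinv⟩, hp, hinv, ?_⟩
  intro B hB
  obtain ⟨a, b, hab, rfl⟩ := Finset.card_eq_two.1 (hP2 B hB)
  refine ⟨a, ?_⟩
  change _ = ({a, p a} : Finset α)
  rw [huniq a b hab.symm hB] 

/-- Given two partitions `P` and `Q` of a finite set into pairs, there is a subset `X`
containing exactly one element of every pair of `P` and exactly one element of every pair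
of `Q`. -/
theorem exists_common_transversal_of_two_pair_partitions {α : Type*} [Fintype α]
    [DecidableEq α] (P Q : Finset (Finset α))
    (hP2 : ∀ B ∈ P, B.card = 2) (hQ2 : ∀ B ∈ Q, B.card = 2)
    (hPdisj : ∀ B ∈ P, ∀ C ∈ P, B ≠ C → Disjoint B C)
    (hQdisj : ∀ B ∈ Q, ∀ C ∈ Q, B ≠ C → Disjoint B C)
    (hPcov : ∀ x : α, ∃ B ∈ P, x ∈ B)
    (hQcov : ∀ x : α, ∃ B ∈ Q, x ∈ B) :
    ∃ X : Finset α,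
      (∀ B ∈ P, (B ∩ X).card = 1) ∧ (∀ B ∈ Q, (B ∩ X).card = 1) := by
  obtain ⟨p, hp, hpp, hpB⟩ := pair_involution P hP2 hPdisj hPcov
  obtain ⟨q, hq, hqq, hqB⟩ := pair_involution Q hQ2 hQdisj hQcov
  have hp1 : p * p = 1 := Equiv.ext hpp
  have hq1 : q * q = 1 := Equiv.ext hqq
  have hpi : p⁻¹ = p := inv_eq_of_mul_eq_one_left hp1
  have hqi : q⁻¹ = q := inv_eq_of_mul_eq_one_left hq1
  obtain ⟨g, hg⟩ : ∃ g, g = p * q := ⟨_, rfl⟩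
  -- `p` conjugates `g` to its inverse
  have hconj : ∀ k : ℤ, p * g ^ k = g ^ (-k) * p := by
    intro k
    have h1 : p * g * p⁻¹ = g⁻¹ := by
      rw [hg, mul_inv_rev, hqi, ← mul_assoc, hp1, one_mul, hpi]
    have h2 : p * g ^ k * p⁻¹ = g ^ (-k) := by
      rw [← conj_zpow, h1, inv_zpow, zpow_neg]
    rw [← h2]; group
  have hnot : ∀ x, ¬ g.SameCycle x (p x) := by
    rintro x ⟨k, hk⟩
    rcases Int.even_or_odd' k with ⟨m, rfl | rfl⟩
    · apply hp ((g ^ m) x)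
      rw [← Equiv.Perm.mul_apply, hconj, Equiv.Perm.mul_apply, ← hk,
        ← Equiv.Perm.mul_apply, ← zpow_add]
      congr 2; ring
    · apply hq ((g ^ m) x)
      apply p.injective
      rw [← Equiv.Perm.mul_apply p q, ← hg, ← Equiv.Perm.mul_apply p, hconj,
        Equiv.Perm.mul_apply, ← hk, ← Equiv.Perm.mul_apply, ← Equiv.Perm.mul_apply,
        ← zpow_add, ← zpow_one_add]
      congr 2; ring
  have hpq : ∀ x, g.SameCycle (p x) (q x) := by
    intro x
    refine ⟨-1, ?_⟩
    rw [← Equiv.Perm.mul_apply, zpow_neg_one, hg, mul_inv_rev, hpi, hqi, mul_assoc, hp1, mul_one]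
  have hqpx : ∀ x, g.SameCycle (p (q x)) x := by
    intro x
    refine ⟨-1, ?_⟩
    rw [zpow_neg_one, hg, ← Equiv.Perm.mul_apply p q, ← Equiv.Perm.mul_apply, inv_mul_cancel, Equiv.Perm.one_apply]
  -- a colour for each cycle
  obtain ⟨c, hc⟩ : ∃ c : α → Fin (Fintype.card α), ∀ x y, c x = c y ↔ g.SameCycle x y := by
    let s := Equiv.Perm.SameCycle.setoid g
    refine ⟨fun x => Fintype.equivFin α (Quotient.mk s x).out, fun x y => ?_⟩
    rw [(Fintype.equivFin α).apply_eq_iff_eq, Quotient.out_inj]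
    exact Quotient.eq (r := s)
  have key : ∀ (r : α → α), (∀ x, r x ≠ x) → (∀ x, c (r x) = c (p x)) →
      (∀ x, c (p (r x)) = c x) → ∀ x,
      (({x, r x} : Finset α) ∩ Finset.univ.filter (fun x => c x < c (p x))).card = 1 := by
    intro r hr h1 h2 x
    have hne : c x ≠ c (p x) := fun h => hnot x ((hc _ _).1 h)
    rw [Finset.card_eq_one]
    rcases lt_or_gt_of_ne hne with h | h
    · refine ⟨x, ?_⟩
      ext y
      simp only [Finset.mem_inter, Finset.mem_insert, Finset.mem_singleton, Finset.mem_filter,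
        Finset.mem_univ, true_and]
      constructor
      · rintro ⟨rfl | rfl, hy⟩
        · rfl
        · rw [h1, h2] at hy
          exact absurd hy h.not_gt
      · rintro rfl
        exact ⟨Or.inl rfl, h⟩
    · refine ⟨r x, ?_⟩
      ext y
      simp only [Finset.mem_inter, Finset.mem_insert, Finset.mem_singleton, Finset.mem_filter,
        Finset.mem_univ, true_and]
      constructor
      · rintro ⟨rfl | rfl, hy⟩
        · exact absurd hy h.not_gt
        · rfl
      · rintro rfl
        refine ⟨Or.inr rfl, ?_⟩
        rw [h1, h2]
        exact h
  refine ⟨Finset.univ.filter (fun x => c x < c (p x)), ?_, ?_⟩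
  · intro B hB
    obtain ⟨x, rfl⟩ := hpB B hB
    exact key p hp (fun _ => rfl) (fun x => by rw [hpp]) x
  · intro B hB
    obtain ⟨x, rfl⟩ := hqB B hB
    exact key q hq (fun x => ((hc _ _).2 (hpq x)).symm) (fun x => (hc _ _).2 (hqpx x)) x
end

section
/- Let M' be a finite item set partitioned into k disjoint triples T_1,…,T_k, and let v_1, v_2 be additive valuations with v_1(M') = v_2(M') = 1 such that in every triple there is a single item that is strictly most valuable for both agents simultaneously, i.e., for each j there is a ∈ T_j with v_1(a) > v_1(b) and v_2(a) > v_2(b) for both other items b ∈ T_j. Then there exists X ⊆ M' with |X ∩ T_j| = 1 for every j such that for each agent i ∈ {1,2}: if v_i(X) < 1/3 then there exists an item g ∈ M' \ X with v_i(X) + (2/3)·v_i(g) ≥ 1/3, and if v_i(X) > 1/3 then there exists an item g ∈ X with v_i(X) − (2/3)·v_i(g) ≤ 1/3. -/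
open Finset

/-- The pair `g, h` is an acceptable choice for one agent with fractional target `t`. -/
def OkPair {ι : Type*} (U : Finset ι) (w : ι → ℝ) (t : ℝ) (g h : ι) : Prop :=
  (w g + w h - t ≤ 2 / 3 * w g ∨ w g + w h - t ≤ 2 / 3 * w h) ∧
    ∃ o ∈ U, o ≠ g ∧ o ≠ h ∧ t - w g - w h ≤ 2 / 3 * w o

/-- Fractional value of two half-split pairs. -/
def fracVal {ι : Type*} (w : ι → ℝ) (x y : ℝ) (p q r s : ι) : ℝ :=
  x * w p + (1 - x) * w q + (y * w r + (1 - y) * w s)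

/-- Parallel situation, one agent, both differences nonnegative: opposite rounding. -/
lemma ok_ps {ι : Type*} (U : Finset ι) (w : ι → ℝ) (hw : ∀ g, 0 ≤ w g) (x y : ℝ)
    (p q r s : ι) (hr : r ∈ U) (hrp : r ≠ p) (hrs : r ≠ s)
    (hd : w q ≤ w p) (he : w s ≤ w r) (hx : 1 / 3 ≤ x) (hx1 : x ≤ 1) (hy0 : 0 ≤ y)
    (hy : y ≤ 2 / 3) : OkPair U w (fracVal w x y p q r s) p s := by
  have := hw p; have := hw q; have := hw r; have := hw s
  refine ⟨Or.inl ?_, r, hr, hrp, hrs, ?_⟩ <;> unfold fracVal <;>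
  nlinarith [mul_nonneg (sub_nonneg.2 hx1) (hw q), mul_nonneg (sub_nonneg.2 hx) (hw p),
    mul_nonneg hy0 (sub_nonneg.2 he), mul_nonneg hy0 (hw s), mul_nonneg (sub_nonneg.2 hy) (hw r),
    mul_nonneg (sub_nonneg.2 hx1) (sub_nonneg.2 hd)]

/-- Same orientation rounding: both up. -/
lemma ok_up {ι : Type*} (U : Finset ι) (w : ι → ℝ) (hw : ∀ g, 0 ≤ w g) (x y : ℝ)
    (p q r s : ι) (hq : q ∈ U) (hqp : q ≠ p) (hqr : q ≠ r)
    (hd : w q ≤ w p) (he : w s ≤ w r) (hx1 : x ≤ 1) (hy1 : y ≤ 1)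
    (hxy : 4 / 3 ≤ x + y) : OkPair U w (fracVal w x y p q r s) p r := by
  have := hw p; have := hw q; have := hw r; have := hw s
  have a1 := mul_nonneg (sub_nonneg.2 hx1) (hw q)
  have a2 := mul_nonneg (sub_nonneg.2 hy1) (hw s)
  refine ⟨?_, q, hq, hqp, hqr, ?_⟩
  · rcases le_total (w p) (w r) with h | h
    · right; unfold fracVal
      nlinarith [mul_nonneg (sub_nonneg.2 hx1) (sub_nonneg.2 h),
        mul_nonneg (sub_nonneg.2 hxy) (hw r)]
    · left; unfold fracVal
      nlinarith [mul_nonneg (sub_nonneg.2 hy1) (sub_nonneg.2 h),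
        mul_nonneg (sub_nonneg.2 hxy) (hw p)]
  · unfold fracVal
    nlinarith [mul_nonneg (sub_nonneg.2 hx1) (sub_nonneg.2 hd),
      mul_nonneg (sub_nonneg.2 hy1) (sub_nonneg.2 he)]

/-- Same orientation rounding: both down. -/
lemma ok_dn {ι : Type*} (U : Finset ι) (w : ι → ℝ) (hw : ∀ g, 0 ≤ w g) (x y : ℝ)
    (p q r s : ι) (hp : p ∈ U) (hr : r ∈ U) (hpq : p ≠ q) (hps : p ≠ s) (hrq : r ≠ q) (hrs : r ≠ s)
    (hd : w q ≤ w p) (he : w s ≤ w r) (hx0 : 0 ≤ x) (hy0 : 0 ≤ y)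
    (hxy : x + y ≤ 2 / 3) : OkPair U w (fracVal w x y p q r s) q s := by
  have := hw p; have := hw q; have := hw r; have := hw s
  have a1 := mul_nonneg hx0 (hw q)
  have a2 := mul_nonneg hy0 (hw s)
  refine ⟨Or.inl ?_, ?_⟩
  · unfold fracVal
    nlinarith [mul_nonneg hx0 (sub_nonneg.2 hd), mul_nonneg hy0 (sub_nonneg.2 he)]
  · rcases le_total (w p) (w r) with h | h
    · refine ⟨r, hr, hrq, hrs, ?_⟩; unfold fracVal
      nlinarith [mul_nonneg hx0 (sub_nonneg.2 h), mul_nonneg (sub_nonneg.2 hxy) (hw r)]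
    · refine ⟨p, hp, hpq, hps, ?_⟩; unfold fracVal
      nlinarith [mul_nonneg hy0 (sub_nonneg.2 h), mul_nonneg (sub_nonneg.2 hxy) (hw p)]

lemma fracVal_swap1 {ι : Type*} (w : ι → ℝ) (x y : ℝ) (p q r s : ι) :
    fracVal w x y p q r s = fracVal w (1 - x) y q p r s := by unfold fracVal; ring

lemma fracVal_swap2 {ι : Type*} (w : ι → ℝ) (x y : ℝ) (p q r s : ι) :
    fracVal w x y p q r s = fracVal w x (1 - y) p q s r := by unfold fracVal; ring

lemma fracVal_swap3 {ι : Type*} (w : ι → ℝ) (x y : ℝ) (p q r s : ι) :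
    fracVal w x y p q r s = fracVal w y x r s p q := by unfold fracVal; ring

lemma fracVal_swap12 {ι : Type*} (w : ι → ℝ) (x y : ℝ) (p q r s : ι) :
    fracVal w x y p q r s = fracVal w (1 - x) (1 - y) q p s r := by unfold fracVal; ring

lemma OkPair.symm {ι : Type*} {U : Finset ι} {w : ι → ℝ} {t : ℝ} {g h : ι}
    (H : OkPair U w t g h) : OkPair U w t h g := by
  obtain ⟨h1, o, ho, hg, hh, h2⟩ := H
  refine ⟨?_, o, ho, hh, hg, by linarith⟩
  rcases h1 with h1 | h1
  · right; linarith
  · left; linarith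

/-- For one agent, aligned differences; which roundings work. -/
lemma ok_aligned {ι : Type*} (U : Finset ι) (w : ι → ℝ) (hw : ∀ g, 0 ≤ w g) (x y : ℝ)
    (p q r s : ι) (hp : p ∈ U) (hq : q ∈ U) (hr : r ∈ U) (hs : s ∈ U)
    (hpq : p ≠ q) (hrs : r ≠ s) (hpr : p ≠ r) (hps : p ≠ s) (hqr : q ≠ r) (hqs : q ≠ s)
    (hx0 : 0 ≤ x) (hx1 : x ≤ 1) (hy0 : 0 ≤ y) (hy1 : y ≤ 1)
    (H : (w q ≤ w p ∧ w s ≤ w r) ∨ (w p ≤ w q ∧ w r ≤ w s)) :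
    (1 / 3 ≤ x → y ≤ 2 / 3 → OkPair U w (fracVal w x y p q r s) p s) ∧
    (x ≤ 2 / 3 → 1 / 3 ≤ y → OkPair U w (fracVal w x y p q r s) q r) ∧
    (4 / 3 ≤ x + y → OkPair U w (fracVal w x y p q r s) p r) ∧
    (x + y ≤ 2 / 3 → OkPair U w (fracVal w x y p q r s) q s) := by
  rcases H with ⟨hd, he⟩ | ⟨hd, he⟩
  · refine ⟨fun h1 h2 => ok_ps U w hw x y p q r s hr hpr.symm hrs hd he h1 hx1 hy0 h2,
      fun h1 h2 => ?_,
      fun h => ok_up U w hw x y p q r s hq hpq.symm hqr hd he hx1 hy1 h,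
      fun h => ok_dn U w hw x y p q r s hp hr hpq hps hqr.symm hrs hd he hx0 hy0 h⟩
    rw [fracVal_swap3]
    exact (ok_ps U w hw y x r s p q hp hpr hpq he hd h2 hy1 hx0 h1).symm
  · refine ⟨fun h1 h2 => ?_, fun h1 h2 => ?_, fun h => ?_, fun h => ?_⟩
    · rw [fracVal_swap12, fracVal_swap3]
      exact (ok_ps U w hw (1 - y) (1 - x) s r q p hq hqs hpq.symm he hd (by linarith)
        (by linarith) (by linarith) (by linarith)).symm
    · rw [fracVal_swap12]
      exact ok_ps U w hw (1 - x) (1 - y) q p s r hs hqs.symm hrs.symm hd he (by linarith)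
        (by linarith) (by linarith) (by linarith)
    · rw [fracVal_swap12]
      exact ok_dn U w hw (1 - x) (1 - y) q p s r hq hs hpq.symm hqr hps.symm hrs.symm hd he
        (by linarith) (by linarith) (by linarith)
    · rw [fracVal_swap12]
      exact ok_up U w hw (1 - x) (1 - y) q p s r hp hpq hps hd he
        (by linarith) (by linarith) (by linarith)

/-- There is an acceptable rounding for both agents. -/
def HasRound {ι : Type*} (T₁ T₂ U : Finset ι) (w₁ w₂ : ι → ℝ) (x y : ℝ) (p q r s : ι) : Prop :=
  ∃ g ∈ T₁, ∃ h ∈ T₂, OkPair U w₁ (fracVal w₁ x y p q r s) g h ∧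
    OkPair U w₂ (fracVal w₂ x y p q r s) g h

lemma round_parallel {ι : Type*} (T₁ T₂ U : Finset ι) (w₁ w₂ : ι → ℝ)
    (hw₁ : ∀ g, 0 ≤ w₁ g) (hw₂ : ∀ g, 0 ≤ w₂ g) (x y : ℝ)
    (p q r s : ι) (hpT : p ∈ T₁) (hqT : q ∈ T₁) (hrT : r ∈ T₂) (hsT : s ∈ T₂)
    (hp : p ∈ U) (hq : q ∈ U) (hr : r ∈ U) (hs : s ∈ U)
    (hpq : p ≠ q) (hrs : r ≠ s) (hpr : p ≠ r) (hps : p ≠ s) (hqr : q ≠ r) (hqs : q ≠ s)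
    (hx0 : 0 ≤ x) (hx1 : x ≤ 1) (hy0 : 0 ≤ y) (hy1 : y ≤ 1)
    (H₁ : (w₁ q ≤ w₁ p ∧ w₁ s ≤ w₁ r) ∨ (w₁ p ≤ w₁ q ∧ w₁ r ≤ w₁ s))
    (H₂ : (w₂ q ≤ w₂ p ∧ w₂ s ≤ w₂ r) ∨ (w₂ p ≤ w₂ q ∧ w₂ r ≤ w₂ s)) :
    HasRound T₁ T₂ U w₁ w₂ x y p q r s := by
  obtain ⟨a1, a2, a3, a4⟩ := ok_aligned U w₁ hw₁ x y p q r s hp hq hr hs hpq hrs hpr hps hqr hqs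
    hx0 hx1 hy0 hy1 H₁
  obtain ⟨b1, b2, b3, b4⟩ := ok_aligned U w₂ hw₂ x y p q r s hp hq hr hs hpq hrs hpr hps hqr hqs
    hx0 hx1 hy0 hy1 H₂
  by_cases c1 : 1 / 3 ≤ x ∧ y ≤ 2 / 3
  · exact ⟨p, hpT, s, hsT, a1 c1.1 c1.2, b1 c1.1 c1.2⟩
  by_cases c2 : x ≤ 2 / 3 ∧ 1 / 3 ≤ y
  · exact ⟨q, hqT, r, hrT, a2 c2.1 c2.2, b2 c2.1 c2.2⟩
  by_cases c3 : 4 / 3 ≤ x + y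
  · exact ⟨p, hpT, r, hrT, a3 c3, b3 c3⟩
  by_cases c4 : x + y ≤ 2 / 3
  · exact ⟨q, hqT, s, hsT, a4 c4, b4 c4⟩
  exfalso
  rw [not_and_or, not_le, not_le] at c1 c2
  rw [not_le] at c3 c4
  rcases c1 with c1 | c1 <;> rcases c2 with c2 | c2 <;> linarith

/-- Mixed case, `x ≤ 2/3`, `y ≤ 2/3`. -/
lemma round_mixed_A {ι : Type*} (T₁ T₂ U : Finset ι) (w₁ w₂ : ι → ℝ)
    (hw₁ : ∀ g, 0 ≤ w₁ g) (hw₂ : ∀ g, 0 ≤ w₂ g) (x y : ℝ)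
    (p q r s a : ι) (hqT : q ∈ T₁) (hrT : r ∈ T₂) (hsT : s ∈ T₂) (haT : a ∈ T₂)
    (hp : p ∈ U) (hr : r ∈ U) (ha : a ∈ U)
    (hpq : p ≠ q) (hrs : r ≠ s) (har : a ≠ r) (has : a ≠ s)
    (hpr : p ≠ r) (hps : p ≠ s) (hpa : p ≠ a) (hqr : q ≠ r) (hqa : q ≠ a)
    (hx0 : 0 ≤ x) (hy0 : 0 ≤ y)
    (hd₁ : w₁ q ≤ w₁ p) (hd₂ : w₂ q ≤ w₂ p) (he₁ : w₁ s ≤ w₁ r) (he₂ : w₂ r ≤ w₂ s)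
    (ha₁ : w₁ r ≤ w₁ a) (ha₂ : w₂ s ≤ w₂ a) (hx : x ≤ 2 / 3) (hy : y ≤ 2 / 3) :
    HasRound T₁ T₂ U w₁ w₂ x y p q r s := by
  have p1 := hw₁ p; have q1 := hw₁ q; have r1 := hw₁ r; have s1 := hw₁ s
  have p2 := hw₂ p; have q2 := hw₂ q; have r2 := hw₂ r; have s2 := hw₂ s
  have A1 := mul_nonneg hx0 (sub_nonneg.2 hd₁)
  have A2 := mul_nonneg hx0 (sub_nonneg.2 hd₂)
  have B1 := mul_nonneg hy0 (sub_nonneg.2 he₁)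
  have B2 := mul_nonneg hy0 (sub_nonneg.2 he₂)
  have C1 := mul_nonneg (sub_nonneg.2 hx) p1
  have C2 := mul_nonneg (sub_nonneg.2 hx) p2
  have D1 := mul_nonneg hx0 q1
  have D2 := mul_nonneg hx0 q2
  have E1 := mul_nonneg (sub_nonneg.2 hy) (sub_nonneg.2 he₁)
  have E2 := mul_nonneg (sub_nonneg.2 hy) (sub_nonneg.2 he₂)
  have F2 := mul_nonneg hy0 r2
  by_cases c1 : OkPair U w₁ (fracVal w₁ x y p q r s) q s
  · refine ⟨q, hqT, s, hsT, c1, Or.inr ?_, p, hp, hpq, hps, ?_⟩ <;> unfold fracVal <;> nlinarith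
  have hS : ∀ o ∈ U, o ≠ q → o ≠ s → 2 / 3 * w₁ o < x * (w₁ p - w₁ q) + y * (w₁ r - w₁ s) := by
    intro o ho hoq hos
    by_contra hcon
    apply c1
    refine ⟨Or.inl ?_, o, ho, hoq, hos, ?_⟩ <;> unfold fracVal <;> nlinarith
  have hSa := hS a ha hqa.symm has
  have hSr := hS r hr hqr.symm hrs
  have k1 : OkPair U w₁ (fracVal w₁ x y p q r s) q a := by
    refine ⟨Or.inr ?_, p, hp, hpq, hpa, ?_⟩ <;> unfold fracVal <;> nlinarith
  by_cases c2 : OkPair U w₂ (fracVal w₂ x y p q r s) q a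
  · exact ⟨q, hqT, a, haT, k1, c2⟩
  have hB : 2 / 3 * w₂ a < w₂ a - x * (w₂ p - w₂ q) - (y * w₂ r + (1 - y) * w₂ s) := by
    by_contra hcon
    apply c2
    refine ⟨Or.inr ?_, p, hp, hpq, hpa, ?_⟩ <;> unfold fracVal <;> nlinarith
  refine ⟨q, hqT, r, hrT, ⟨Or.inr ?_, p, hp, hpq, hpr, ?_⟩, Or.inl ?_, a, ha, hqa.symm, har, ?_⟩
    <;> unfold fracVal <;> nlinarith

/-- Mixed case, `x ≥ 2/3`, `y ≥ 2/3`. -/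
lemma round_mixed_B {ι : Type*} (T₁ T₂ U : Finset ι) (w₁ w₂ : ι → ℝ)
    (hw₁ : ∀ g, 0 ≤ w₁ g) (hw₂ : ∀ g, 0 ≤ w₂ g) (x y : ℝ)
    (p q r s : ι) (hpT : p ∈ T₁) (hrT : r ∈ T₂)
    (hq : q ∈ U) (hs : s ∈ U)
    (hpq : p ≠ q) (hrs : r ≠ s) (hps : p ≠ s) (hqr : q ≠ r)
    (hx1 : x ≤ 1) (hy1 : y ≤ 1)
    (hd₁ : w₁ q ≤ w₁ p) (hd₂ : w₂ q ≤ w₂ p) (he₁ : w₁ s ≤ w₁ r) (he₂ : w₂ r ≤ w₂ s)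
    (hx : 2 / 3 ≤ x) (hy : 2 / 3 ≤ y) :
    HasRound T₁ T₂ U w₁ w₂ x y p q r s := by
  refine ⟨p, hpT, r, hrT, ok_up U w₁ hw₁ x y p q r s hq hpq.symm hqr hd₁ he₁ hx1 hy1
    (by linarith), ?_⟩
  rw [fracVal_swap2]
  exact ok_ps U w₂ hw₂ x (1 - y) p q s r hs hps.symm hrs.symm hd₂ he₂ (by linarith) hx1
    (by linarith) (by linarith)

set_option maxHeartbeats 2000000 in
/-- Mixed case, `x ≥ 2/3`, `y` central. -/
lemma round_mixed_C {ι : Type*} (T₁ T₂ U : Finset ι) (w₁ w₂ : ι → ℝ)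
    (hw₁ : ∀ g, 0 ≤ w₁ g) (hw₂ : ∀ g, 0 ≤ w₂ g) (x y : ℝ)
    (p q r s a : ι) (hpT : p ∈ T₁) (hqT : q ∈ T₁) (hrT : r ∈ T₂) (hsT : s ∈ T₂) (haT : a ∈ T₂)
    (hp : p ∈ U) (hq : q ∈ U) (hr : r ∈ U) (hs : s ∈ U) (ha : a ∈ U)
    (hpq : p ≠ q) (hrs : r ≠ s) (har : a ≠ r) (has : a ≠ s)
    (hpr : p ≠ r) (hps : p ≠ s) (hpa : p ≠ a) (hqr : q ≠ r) (hqs : q ≠ s) (hqa : q ≠ a)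
    (hx1 : x ≤ 1)
    (hd₁ : w₁ q ≤ w₁ p) (hd₂ : w₂ q ≤ w₂ p) (he₁ : w₁ s ≤ w₁ r) (he₂ : w₂ r ≤ w₂ s)
    (ha₁ : w₁ r ≤ w₁ a) (ha₂ : w₂ s ≤ w₂ a) (hx : 2 / 3 ≤ x) (hy : y ≤ 2 / 3)
    (hy' : 1 / 3 ≤ y) :
    HasRound T₁ T₂ U w₁ w₂ x y p q r s := by
  have p1 := hw₁ p; have q1 := hw₁ q; have r1 := hw₁ r; have s1 := hw₁ s
  have p2 := hw₂ p; have q2 := hw₂ q; have r2 := hw₂ r; have s2 := hw₂ s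
  have k1 : OkPair U w₂ (fracVal w₂ x y p q r s) p r := by
    rw [fracVal_swap2]
    exact ok_ps U w₂ hw₂ x (1 - y) p q s r hs hps.symm hrs.symm hd₂ he₂ (by linarith) hx1
      (by linarith) (by linarith)
  have k2 : OkPair U w₁ (fracVal w₁ x y p q r s) p s :=
    ok_ps U w₁ hw₁ x y p q r s hr hpr.symm hrs hd₁ he₁ (by linarith) hx1 (by linarith) hy
  by_cases c1 : OkPair U w₁ (fracVal w₁ x y p q r s) p r
  · exact ⟨p, hpT, r, hrT, c1, k1⟩
  by_cases c2 : OkPair U w₂ (fracVal w₂ x y p q r s) p s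
  · exact ⟨p, hpT, s, hsT, k2, c2⟩
  have X1 := mul_nonneg (sub_nonneg.2 hx1) (sub_nonneg.2 hd₁)
  have X2 := mul_nonneg (sub_nonneg.2 hx1) (sub_nonneg.2 hd₂)
  have Z1 := mul_nonneg (sub_nonneg.2 hx1) q1
  have Z2 := mul_nonneg (sub_nonneg.2 hx1) q2
  have W1 := mul_nonneg (sub_nonneg.2 hx) (sub_nonneg.2 hd₁)
  have W2 := mul_nonneg (sub_nonneg.2 hx) (sub_nonneg.2 hd₂)
  have Y1 := mul_nonneg (sub_nonneg.2 hy) (sub_nonneg.2 he₁)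
  have Y2 := mul_nonneg (sub_nonneg.2 hy) (sub_nonneg.2 he₂)
  have V1 := mul_nonneg (sub_nonneg.2 hy') (sub_nonneg.2 he₁)
  have V2 := mul_nonneg (sub_nonneg.2 hy') (sub_nonneg.2 he₂)
  have h1 : 2 / 3 * w₁ p < (1 - x) * (w₁ p - w₁ q) + (1 - y) * (w₁ r - w₁ s) := by
    by_contra hcon
    apply c1
    refine ⟨Or.inl ?_, q, hq, hpq.symm, hqr, ?_⟩ <;> unfold fracVal <;> nlinarith
  have h2 : 2 / 3 * w₂ p < (1 - x) * (w₂ p - w₂ q) + y * (w₂ s - w₂ r) := by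
    by_contra hcon
    apply c2
    refine ⟨Or.inl ?_, q, hq, hpq.symm, hqs, ?_⟩ <;> unfold fracVal <;> nlinarith
  have k3 : OkPair U w₂ (fracVal w₂ x y p q r s) q s := by
    refine ⟨Or.inr ?_, p, hp, hpq, hps, ?_⟩ <;> unfold fracVal <;> nlinarith
  have k4 : OkPair U w₁ (fracVal w₁ x y p q r s) q r := by
    refine ⟨Or.inr ?_, p, hp, hpq, hpr, ?_⟩ <;> unfold fracVal <;> nlinarith
  by_cases c3 : OkPair U w₁ (fracVal w₁ x y p q r s) q s
  · exact ⟨q, hqT, s, hsT, c3, k3⟩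
  by_cases c4 : OkPair U w₂ (fracVal w₂ x y p q r s) q r
  · exact ⟨q, hqT, r, hrT, k4, c4⟩
  have h3 : 2 / 3 * w₁ a < x * (w₁ p - w₁ q) + y * (w₁ r - w₁ s) := by
    by_contra hcon
    apply c3
    refine ⟨Or.inl ?_, a, ha, hqa.symm, has, ?_⟩ <;> unfold fracVal <;> nlinarith
  have h4 : 2 / 3 * w₂ a < x * (w₂ p - w₂ q) + (1 - y) * (w₂ s - w₂ r) := by
    by_contra hcon
    apply c4
    refine ⟨Or.inl ?_, a, ha, hqa.symm, har, ?_⟩ <;> unfold fracVal <;> nlinarith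
  refine ⟨q, hqT, a, haT, ⟨Or.inr ?_, p, hp, hpq, hpa, ?_⟩, Or.inr ?_, p, hp, hpq, hpa, ?_⟩
    <;> unfold fracVal <;> nlinarith

lemma HasRound.swapAgents {ι : Type*} {T₁ T₂ U : Finset ι} {w₁ w₂ : ι → ℝ} {x y : ℝ}
    {p q r s : ι} (H : HasRound T₁ T₂ U w₁ w₂ x y p q r s) :
    HasRound T₁ T₂ U w₂ w₁ x y p q r s := by
  obtain ⟨g, hg, h, hh, a, b⟩ := H
  exact ⟨g, hg, h, hh, b, a⟩

lemma HasRound.swap1 {ι : Type*} {T₁ T₂ U : Finset ι} {w₁ w₂ : ι → ℝ} {x y : ℝ}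
    {p q r s : ι} (H : HasRound T₁ T₂ U w₁ w₂ (1 - x) y q p r s) :
    HasRound T₁ T₂ U w₁ w₂ x y p q r s := by
  obtain ⟨g, hg, h, hh, a, b⟩ := H
  refine ⟨g, hg, h, hh, ?_, ?_⟩ <;> rw [fracVal_swap1] <;> assumption

lemma HasRound.swap2 {ι : Type*} {T₁ T₂ U : Finset ι} {w₁ w₂ : ι → ℝ} {x y : ℝ}
    {p q r s : ι} (H : HasRound T₁ T₂ U w₁ w₂ x (1 - y) p q s r) :
    HasRound T₁ T₂ U w₁ w₂ x y p q r s := by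
  obtain ⟨g, hg, h, hh, a, b⟩ := H
  refine ⟨g, hg, h, hh, ?_, ?_⟩ <;> rw [fracVal_swap2] <;> assumption

lemma HasRound.swapT {ι : Type*} {T₁ T₂ U : Finset ι} {w₁ w₂ : ι → ℝ} {x y : ℝ}
    {p q r s : ι} (H : HasRound T₂ T₁ U w₁ w₂ y x r s p q) :
    HasRound T₁ T₂ U w₁ w₂ x y p q r s := by
  obtain ⟨g, hg, h, hh, a, b⟩ := H
  refine ⟨h, hh, g, hg, ?_, ?_⟩ <;> rw [fracVal_swap3] <;> apply OkPair.symm <;> assumption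

/-- Mixed case. -/
lemma round_mixed {ι : Type*} (T₁ T₂ U : Finset ι) (w₁ w₂ : ι → ℝ)
    (hw₁ : ∀ g, 0 ≤ w₁ g) (hw₂ : ∀ g, 0 ≤ w₂ g) (x y : ℝ)
    (hU₁ : T₁ ⊆ U) (hU₂ : T₂ ⊆ U) (hdis : ∀ g ∈ T₁, ∀ h ∈ T₂, g ≠ h)
    (hfav : ∃ a ∈ T₂, ∀ b ∈ T₂, b ≠ a → w₁ b < w₁ a ∧ w₂ b < w₂ a)
    (p q r s : ι) (hp : p ∈ T₁) (hq : q ∈ T₁) (hr : r ∈ T₂) (hs : s ∈ T₂)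
    (hpq : p ≠ q)
    (hx0 : 0 ≤ x) (hx1 : x ≤ 1) (hy0 : 0 ≤ y) (hy1 : y ≤ 1)
    (hd₁ : w₁ q ≤ w₁ p) (hd₂ : w₂ q ≤ w₂ p) (he₁ : w₁ s < w₁ r) (he₂ : w₂ r < w₂ s) :
    HasRound T₁ T₂ U w₁ w₂ x y p q r s := by
  have hrs : r ≠ s := by rintro rfl; exact lt_irrefl _ he₁
  obtain ⟨a, ha, hfa⟩ := hfav
  have har : a ≠ r := by
    rintro rfl
    exact lt_asymm he₂ (hfa s hs hrs.symm).2
  have has : a ≠ s := by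
    rintro rfl
    exact lt_asymm he₁ (hfa r hr hrs).1
  have far := hfa r hr har.symm
  have fas := hfa s hs has.symm
  rcases le_total x (2 / 3) with hx | hx
  · rcases le_total y (2 / 3) with hy | hy
    · exact round_mixed_A T₁ T₂ U w₁ w₂ hw₁ hw₂ x y p q r s a hq hr hs ha (hU₁ hp) (hU₂ hr)
        (hU₂ ha) hpq hrs har has (hdis _ hp _ hr) (hdis _ hp _ hs) (hdis _ hp _ ha)
        (hdis _ hq _ hr) (hdis _ hq _ ha) hx0 hy0 hd₁ hd₂ he₁.le he₂.le far.1.le fas.2.le hx hy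
    · apply HasRound.swap2
      apply HasRound.swapAgents
      exact round_mixed_A T₁ T₂ U w₂ w₁ hw₂ hw₁ x (1 - y) p q s r a hq hs hr ha (hU₁ hp) (hU₂ hs)
        (hU₂ ha) hpq hrs.symm has har (hdis _ hp _ hs) (hdis _ hp _ hr) (hdis _ hp _ ha)
        (hdis _ hq _ hs) (hdis _ hq _ ha) hx0 (by linarith) hd₂ hd₁ he₂.le he₁.le fas.2.le far.1.le
        hx (by linarith)
  · rcases le_total y (2 / 3) with hy | hy
    · rcases le_total (1 / 3) y with hy' | hy'
      · exact round_mixed_C T₁ T₂ U w₁ w₂ hw₁ hw₂ x y p q r s a hp hq hr hs ha (hU₁ hp) (hU₁ hq)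
          (hU₂ hr) (hU₂ hs) (hU₂ ha) hpq hrs har has (hdis _ hp _ hr) (hdis _ hp _ hs)
          (hdis _ hp _ ha) (hdis _ hq _ hr) (hdis _ hq _ hs) (hdis _ hq _ ha) hx1 hd₁ hd₂ he₁.le
          he₂.le far.1.le fas.2.le hx hy hy'
      · apply HasRound.swap2
        apply HasRound.swapAgents
        exact round_mixed_B T₁ T₂ U w₂ w₁ hw₂ hw₁ x (1 - y) p q s r hp hs (hU₁ hq) (hU₂ hr) hpq
          hrs.symm (hdis _ hp _ hr) (hdis _ hq _ hs) hx1 (by linarith) hd₂ hd₁ he₂.le he₁.le hx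
          (by linarith)
    · exact round_mixed_B T₁ T₂ U w₁ w₂ hw₁ hw₂ x y p q r s hp hr (hU₁ hq) (hU₂ hs) hpq
          hrs (hdis _ hp _ hs) (hdis _ hq _ hr) hx1 hy1 hd₁ hd₂ he₁.le he₂.le hx hy

/-- Two half-split triples can always be rounded. -/
lemma round_two {ι : Type*} (T₁ T₂ U : Finset ι) (w₁ w₂ : ι → ℝ)
    (hw₁ : ∀ g, 0 ≤ w₁ g) (hw₂ : ∀ g, 0 ≤ w₂ g) (x y : ℝ)
    (hU₁ : T₁ ⊆ U) (hU₂ : T₂ ⊆ U) (hdis : ∀ g ∈ T₁, ∀ h ∈ T₂, g ≠ h)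
    (hfav₁ : ∃ a ∈ T₁, ∀ b ∈ T₁, b ≠ a → w₁ b < w₁ a ∧ w₂ b < w₂ a)
    (hfav₂ : ∃ a ∈ T₂, ∀ b ∈ T₂, b ≠ a → w₁ b < w₁ a ∧ w₂ b < w₂ a)
    (p q r s : ι) (hp : p ∈ T₁) (hq : q ∈ T₁) (hr : r ∈ T₂) (hs : s ∈ T₂)
    (hpq : p ≠ q) (hrs : r ≠ s)
    (hx0 : 0 ≤ x) (hx1 : x ≤ 1) (hy0 : 0 ≤ y) (hy1 : y ≤ 1) :
    HasRound T₁ T₂ U w₁ w₂ x y p q r s := by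
  wlog hd : w₁ q ≤ w₁ p generalizing p q x
  · exact HasRound.swap1 (this (1 - x) q p hq hp hpq.symm (by linarith) (by linarith)
      (le_of_not_ge hd))
  wlog he : w₁ s ≤ w₁ r generalizing r s y
  · exact HasRound.swap2 (this (1 - y) s r hs hr hrs.symm (by linarith) (by linarith)
      (le_of_not_ge he))
  by_cases hpar : ((w₁ q ≤ w₁ p ∧ w₁ s ≤ w₁ r) ∨ (w₁ p ≤ w₁ q ∧ w₁ r ≤ w₁ s)) ∧
      ((w₂ q ≤ w₂ p ∧ w₂ s ≤ w₂ r) ∨ (w₂ p ≤ w₂ q ∧ w₂ r ≤ w₂ s))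
  · exact round_parallel T₁ T₂ U w₁ w₂ hw₁ hw₂ x y p q r s hp hq hr hs (hU₁ hp) (hU₁ hq) (hU₂ hr)
      (hU₂ hs) hpq hrs (hdis _ hp _ hr) (hdis _ hp _ hs) (hdis _ hq _ hr) (hdis _ hq _ hs)
      hx0 hx1 hy0 hy1 hpar.1 hpar.2
  by_cases hpar' : ((w₁ q ≤ w₁ p ∧ w₁ r ≤ w₁ s) ∨ (w₁ p ≤ w₁ q ∧ w₁ s ≤ w₁ r)) ∧
      ((w₂ q ≤ w₂ p ∧ w₂ r ≤ w₂ s) ∨ (w₂ p ≤ w₂ q ∧ w₂ s ≤ w₂ r))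
  · apply HasRound.swap2
    exact round_parallel T₁ T₂ U w₁ w₂ hw₁ hw₂ x (1 - y) p q s r hp hq hs hr (hU₁ hp) (hU₁ hq)
      (hU₂ hs) (hU₂ hr) hpq hrs.symm (hdis _ hp _ hs) (hdis _ hp _ hr) (hdis _ hq _ hs)
      (hdis _ hq _ hr) hx0 hx1 (by linarith) (by linarith) hpar'.1 hpar'.2
  rcases le_or_gt (w₂ q) (w₂ p) with h | h
  · have e2 : w₂ r < w₂ s := by
      by_contra hc
      exact hpar ⟨Or.inl ⟨hd, he⟩, Or.inl ⟨h, not_lt.1 hc⟩⟩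
    have e1 : w₁ s < w₁ r := by
      by_contra hc
      exact hpar' ⟨Or.inl ⟨hd, not_lt.1 hc⟩, Or.inl ⟨h, e2.le⟩⟩
    exact round_mixed T₁ T₂ U w₁ w₂ hw₁ hw₂ x y hU₁ hU₂ hdis hfav₂ p q r s hp hq hr hs hpq
      hx0 hx1 hy0 hy1 hd h e1 e2
  · have e2 : w₂ s ≤ w₂ r := by
      by_contra hc
      exact hpar ⟨Or.inl ⟨hd, he⟩, Or.inr ⟨h.le, (not_le.1 hc).le⟩⟩
    have e1 : w₁ q < w₁ p := by
      by_contra hc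
      exact hpar' ⟨Or.inr ⟨not_lt.1 hc, he⟩, Or.inr ⟨h.le, e2⟩⟩
    apply HasRound.swapT
    exact round_mixed T₂ T₁ U w₁ w₂ hw₁ hw₂ y x hU₂ hU₁ (fun g hg h hh => (hdis h hh g hg).symm)
      hfav₁ r s p q hr hs hp hq hrs hy0 hy1 hx0 hx1 he e2 e1 h

lemma sum_univ_eq {ι : Type*} [Fintype ι] [DecidableEq ι] (k : ℕ) (T : Fin k → Finset ι)
    (hTdisj : ∀ j j', j ≠ j' → Disjoint (T j) (T j'))
    (hTcov : ∀ g : ι, ∃ j, g ∈ T j) {β : Type*} [AddCommMonoid β] (f : ι → β) :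
    ∑ g, f g = ∑ j, ∑ g ∈ T j, f g := by
  rw [← Finset.sum_biUnion (fun j _ j' _ h => hTdisj j j' h)]
  apply Finset.sum_congr _ (fun _ _ => rfl)
  ext g
  simpa using hTcov g

/-- A fractional solution with small support. -/
lemma exists_vertex {ι : Type*} [Fintype ι] [DecidableEq ι] (k : ℕ) (T : Fin k → Finset ι)
    (hTcov : ∀ g : ι, ∃ j, g ∈ T j) (v : Fin 2 → ι → ℝ) (n : ℕ) :
    ∀ x : ι → ℝ, (∀ g, 0 ≤ x g) → (∀ j, ∑ g ∈ T j, x g = 1) →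
      (∀ i, ∑ g, x g * v i g = 1 / 3) → #{g | x g ≠ 0} = n →
    ∃ x : ι → ℝ, (∀ g, 0 ≤ x g) ∧ (∀ j, ∑ g ∈ T j, x g = 1) ∧
      (∀ i, ∑ g, x g * v i g = 1 / 3) ∧ #{g | x g ≠ 0} ≤ k + 2 := by
  induction n using Nat.strong_induction_on with
  | _ n ih =>
  intro x hx hT hvx hn
  by_cases hle : #{g | x g ≠ 0} ≤ k + 2
  · exact ⟨x, hx, hT, hvx, hle⟩
  set S : Finset ι := {g | x g ≠ 0} with hS
  obtain ⟨y, hy0, hyne, hyT, hyv⟩ : ∃ y : ι → ℝ, (∀ g, x g = 0 → y g = 0) ∧ (∃ g, y g ≠ 0) ∧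
      (∀ j, ∑ g ∈ T j, y g = 0) ∧ (∀ i, ∑ g, y g * v i g = 0) := by
    let A : Matrix (Fin k ⊕ Fin 2) S ℝ := fun o g =>
      Sum.elim (fun j => if (g : ι) ∈ T j then (1 : ℝ) else 0) (fun i => v i g) o
    have hker : LinearMap.ker A.mulVecLin ≠ ⊥ := by
      apply LinearMap.ker_ne_bot_of_finrank_lt
      simp
      omega
    obtain ⟨z, hz, hz0⟩ := (Submodule.ne_bot_iff _).1 hker
    have hz' : ∀ o, ∑ g : S, A o g * z g = 0 := fun o => by
      have := congrFun (LinearMap.mem_ker.1 hz) o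
      simpa [Matrix.mulVec, dotProduct] using this
    let y : ι → ℝ := fun g => if h : g ∈ S then z ⟨g, h⟩ else 0
    have hyS : ∀ g : S, y g = z g := fun g => by simp [y]
    have hyn : ∀ g, g ∉ S → y g = 0 := fun g hg => by simp [y, hg]
    have key : ∀ f : ι → ℝ, ∑ g, f g * y g = ∑ g : S, f g * z g := by
      intro f
      rw [← Finset.sum_subset (Finset.subset_univ S)
        (fun g _ hg => by rw [hyn g hg, mul_zero])]
      rw [← Finset.sum_coe_sort S]
      exact Finset.sum_congr rfl (fun g _ => by rw [hyS])
    refine ⟨y, fun g hg => hyn g (by simp [hS, hg]), ?_, fun j => ?_, fun i => ?_⟩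
    · by_contra hcon
      push Not at hcon
      exact hz0 (funext fun g => by rw [← hyS, hcon]; rfl)
    · have h1 := key (fun g => if g ∈ T j then 1 else 0)
      have h2 := hz' (Sum.inl j)
      simp only [A, Sum.elim_inl] at h2
      rw [h2] at h1
      simpa [Finset.sum_ite_mem] using h1
    · have h1 := key (v i)
      have h2 := hz' (Sum.inr i)
      simp only [A, Sum.elim_inr] at h2
      rw [h2] at h1
      simpa [mul_comm] using h1
  obtain ⟨g0, hg0⟩ := hyne
  obtain ⟨j0, hj0⟩ := hTcov g0
  obtain ⟨gn, -, hgn⟩ : ∃ g ∈ T j0, 0 < -y g := by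
    apply Finset.exists_pos_of_sum_zero_of_exists_nonzero
    · rw [Finset.sum_neg_distrib, hyT, neg_zero]
    · exact ⟨g0, hj0, by simpa using hg0⟩
  obtain ⟨g1, hg1, hmin⟩ := Finset.exists_min_image ({g | y g < 0} : Finset ι)
    (fun g => x g / (-y g)) ⟨gn, by simp; linarith⟩
  have hg1' : y g1 < 0 := by simpa using hg1
  set t := x g1 / (-y g1) with ht
  have ht0 : 0 ≤ t := div_nonneg (hx _) (by linarith)
  have hzero : x g1 + t * y g1 = 0 := by
    have hne : y g1 ≠ 0 := hg1'.ne
    rw [ht, div_neg, neg_mul, div_mul_cancel₀ _ hne]; ring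
  refine ih _ ?_ (fun g => x g + t * y g) (fun g => ?_) (fun j => ?_) (fun i => ?_) rfl
  · rw [← hn]
    apply Finset.card_lt_card
    rw [Finset.ssubset_iff_of_subset]
    · refine ⟨g1, ?_, by simp [hzero]⟩
      simp only [hS, Finset.mem_filter, Finset.mem_univ, true_and]
      intro h
      have := hy0 g1 h
      linarith
    · intro g
      simp only [hS, Finset.mem_filter, Finset.mem_univ, true_and]
      intro h h'
      apply h
      rw [h', hy0 g h']; ring
  · rcases lt_or_ge (y g) 0 with h | h
    · have := hmin g (by simpa using h)
      rw [le_div_iff₀ (by linarith)] at this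
      linarith
    · have := hx g; positivity
  · rw [Finset.sum_add_distrib, ← Finset.mul_sum, hT, hyT]; ring
  · have : ∀ g, (x g + t * y g) * v i g = x g * v i g + t * (y g * v i g) := fun g => by ring
    simp only [this]
    rw [Finset.sum_add_distrib, ← Finset.mul_sum, hvx, hyv]; ring

/-- Building the transversal from a choice function. -/
lemma finish_transversal {ι : Type*} [Fintype ι] [DecidableEq ι]
    (k : ℕ) (T : Fin k → Finset ι)
    (hTdisj : ∀ j j', j ≠ j' → Disjoint (T j) (T j'))
    (v : Fin 2 → ι → ℝ) (c : Fin k → ι) (hc : ∀ j, c j ∈ T j)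
    (H : ∀ i, (∑ j, v i (c j) ≤ 1 / 3 ∨ ∃ j, ∑ j, v i (c j) - 2 / 3 * v i (c j) ≤ 1 / 3) ∧
      (1 / 3 ≤ ∑ j, v i (c j) ∨
        ∃ g, (∀ j, g ≠ c j) ∧ 1 / 3 ≤ ∑ j, v i (c j) + 2 / 3 * v i g)) :
    ∃ X : Finset ι,
      (∀ j, (X ∩ T j).card = 1) ∧
      ∀ i : Fin 2,
        ((∑ g ∈ X, v i g < 1 / 3) →
          ∃ g, g ∉ X ∧ 1 / 3 ≤ (∑ g' ∈ X, v i g') + 2 / 3 * v i g) ∧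
        ((1 / 3 < ∑ g ∈ X, v i g) →
          ∃ g ∈ X, (∑ g' ∈ X, v i g') - 2 / 3 * v i g ≤ 1 / 3) := by
  have huniq : ∀ j j', c j ∈ T j' → j = j' := by
    intro j j' h
    by_contra hne
    exact Finset.disjoint_left.1 (hTdisj j j' hne) (hc j) h
  have hinj : Function.Injective c := fun j j' h => huniq j j' (h ▸ hc j')
  refine ⟨univ.image c, fun j => ?_, fun i => ?_⟩
  · rw [Finset.card_eq_one]
    refine ⟨c j, ?_⟩
    ext g
    simp only [Finset.mem_inter, Finset.mem_image, Finset.mem_univ, true_and,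
      Finset.mem_singleton]
    constructor
    · rintro ⟨⟨j', rfl⟩, h⟩
      rw [huniq j' j h]
    · rintro rfl
      exact ⟨⟨j, rfl⟩, hc j⟩
  · rw [Finset.sum_image (fun a _ b _ h => hinj h)]
    obtain ⟨h1, h2⟩ := H i
    constructor
    · intro hlt
      rcases h2 with h2 | ⟨g, hg, h2⟩
      · linarith
      · refine ⟨g, ?_, h2⟩
        simp only [Finset.mem_image, Finset.mem_univ, true_and, not_exists]
        exact fun j h => hg j h.symm
    · intro hlt
      rcases h1 with h1 | ⟨j, h1⟩
      · linarith
      · exact ⟨c j, Finset.mem_image_of_mem _ (Finset.mem_univ _), h1⟩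

/-- Let the item set (the whole finite type `ι`) be partitioned into `k` disjoint triples
`T j`, and let two agents have additive valuations `v 0`, `v 1`, each summing to `1`, such
that every triple has a single item that is strictly most valuable for both agents
simultaneously.  Then there is a transversal `X` (one item from each triple) whose value for
each agent is `1/3` up to adding a `2/3` fraction of one outside item or removing a `2/3`
fraction of one inside item. -/
theorem exists_rounded_transversal {ι : Type*} [Fintype ι] [DecidableEq ι]
    (k : ℕ) (T : Fin k → Finset ι)
    (hT3 : ∀ j, (T j).card = 3)
    (hTdisj : ∀ j j', j ≠ j' → Disjoint (T j) (T j'))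
    (hTcov : ∀ g : ι, ∃ j, g ∈ T j)
    (v : Fin 2 → ι → ℝ) (hv : ∀ i g, 0 ≤ v i g)
    (hnorm : ∀ i, ∑ g, v i g = 1)
    (hfav : ∀ j, ∃ a ∈ T j, ∀ b ∈ T j, b ≠ a → v 0 b < v 0 a ∧ v 1 b < v 1 a) :
    ∃ X : Finset ι,
      (∀ j, (X ∩ T j).card = 1) ∧
      ∀ i : Fin 2,
        ((∑ g ∈ X, v i g < 1 / 3) →
          ∃ g, g ∉ X ∧ 1 / 3 ≤ (∑ g' ∈ X, v i g') + 2 / 3 * v i g) ∧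
        ((1 / 3 < ∑ g ∈ X, v i g) →
          ∃ g ∈ X, (∑ g' ∈ X, v i g') - 2 / 3 * v i g ≤ 1 / 3) := by
  obtain ⟨x, hx, hxT, hxv, hcard⟩ := exists_vertex k T hTcov v _ (fun _ => 1 / 3)
    (fun _ => by norm_num) (fun j => by simp [hT3]) (fun i => by
      rw [← Finset.mul_sum, hnorm]; norm_num) rfl
  have huniq : ∀ g j j', g ∈ T j → g ∈ T j' → j = j' := by
    intro g j j' h h'
    by_contra hne
    exact Finset.disjoint_left.1 (hTdisj j j' hne) h h'
  let P : Fin k → Finset ι := fun j => (T j).filter (fun g => x g ≠ 0)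
  have hPsum : ∀ j (f : ι → ℝ), ∑ g ∈ T j, x g * f g = ∑ g ∈ P j, x g * f g := by
    intro j f
    symm
    apply Finset.sum_subset (Finset.filter_subset _ _)
    intro g hg hg'
    have : x g = 0 := by
      by_contra h
      exact hg' (Finset.mem_filter.2 ⟨hg, h⟩)
    rw [this, zero_mul]
  have hPone : ∀ j, ∑ g ∈ P j, x g = 1 := by
    intro j
    have := hPsum j (fun _ => 1)
    simp only [mul_one] at this
    rw [← this, hxT]
  have hPpos : ∀ j, 1 ≤ #(P j) := by
    intro j
    rw [Nat.one_le_iff_ne_zero, Ne, Finset.card_eq_zero]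
    intro h
    have := hPone j
    rw [h] at this
    simp at this
  have hPcard : ∑ j, #(P j) ≤ k + 2 := by
    refine le_trans (le_of_eq ?_) hcard
    rw [Finset.card_filter, sum_univ_eq k T hTdisj hTcov]
    exact Finset.sum_congr rfl (fun j _ => Finset.card_filter _ _)
  have hPex : ∑ j, (#(P j) - 1) ≤ 2 := by
    have : ∑ j, #(P j) = ∑ j, (#(P j) - 1) + k := by
      have h : ∀ j, #(P j) = (#(P j) - 1) + 1 := fun j => by have := hPpos j; omega
      rw [Finset.sum_congr rfl (fun j _ => h j), Finset.sum_add_distrib]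
      simp
    omega
  have hbig : ∀ j, ∃ g ∈ T j, 1 / 3 ≤ x g := by
    intro j
    by_contra hcon
    push Not at hcon
    have hne : (T j).Nonempty := by rw [← Finset.card_pos, hT3]; norm_num
    have := Finset.sum_lt_sum_of_nonempty hne hcon
    rw [hxT, Finset.sum_const, hT3] at this
    norm_num at this
  choose c hc hcx using hbig
  have hcP : ∀ j, c j ∈ P j := fun j => Finset.mem_filter.2 ⟨hc j, by
    have := hcx j; intro h; rw [h] at this; norm_num at this⟩
  have hsingle : ∀ j, #(P j) < 2 → ∀ i, v i (c j) - ∑ g ∈ T j, x g * v i g = 0 := by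
    intro j hj i
    have h1 : #(P j) = 1 := by have := hPpos j; omega
    obtain ⟨a, ha⟩ := Finset.card_eq_one.1 h1
    have hca : c j = a := by simpa [ha] using hcP j
    have := hPone j
    rw [ha, Finset.sum_singleton] at this
    rw [hPsum, ha, Finset.sum_singleton, this, hca]; ring
  have hthird : ∀ i, ∑ j, ∑ g ∈ T j, x g * v i g = 1 / 3 := fun i => by
    rw [← sum_univ_eq k T hTdisj hTcov, hxv]
  by_cases hcase : ∃ j1 j2, j1 ≠ j2 ∧ 2 ≤ #(P j1) ∧ 2 ≤ #(P j2)
  · obtain ⟨j1, j2, hne, h1, h2⟩ := hcase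
    have hrest : ∀ s : Finset (Fin k), ∑ j ∈ s, (#(P j) - 1) ≤ 2 := fun s =>
      le_trans (Finset.sum_le_sum_of_subset (Finset.subset_univ s)) hPex
    have hpair := hrest {j1, j2}
    rw [Finset.sum_pair hne] at hpair
    have hothers : ∀ j, j ≠ j1 → j ≠ j2 → #(P j) < 2 := by
      intro j hj1 hj2
      have := hrest {j, j1, j2}
      rw [Finset.sum_insert (by simp [hj1, hj2]), Finset.sum_pair hne] at this
      omega
    obtain ⟨p, q, hpq, hP1⟩ := Finset.card_eq_two.1 (show #(P j1) = 2 by omega)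
    obtain ⟨r, s, hrs, hP2⟩ := Finset.card_eq_two.1 (show #(P j2) = 2 by omega)
    have hx1 := hPone j1
    have hx2 := hPone j2
    rw [hP1, Finset.sum_pair hpq] at hx1
    rw [hP2, Finset.sum_pair hrs] at hx2
    have hsub : ∀ j, P j ⊆ T j := fun j => Finset.filter_subset _ _
    have hpT : p ∈ T j1 := hsub j1 (by simp [hP1])
    have hqT : q ∈ T j1 := hsub j1 (by simp [hP1])
    have hrT : r ∈ T j2 := hsub j2 (by simp [hP2])
    have hsT : s ∈ T j2 := hsub j2 (by simp [hP2])
    have hfr : ∀ i, ∑ g ∈ T j1, x g * v i g + ∑ g ∈ T j2, x g * v i g =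
        fracVal (v i) (x p) (x r) p q r s := by
      intro i
      rw [hPsum, hPsum, hP1, hP2, Finset.sum_pair hpq, Finset.sum_pair hrs]
      unfold fracVal
      rw [show x q = 1 - x p by linarith, show x s = 1 - x r by linarith]
    have hxp := hx p; have hxq := hx q; have hxr := hx r; have hxs := hx s
    obtain ⟨g, hg, h, hh, ok0, ok1⟩ := round_two (T j1) (T j2) (T j1 ∪ T j2) (v 0) (v 1)
      (hv 0) (hv 1) (x p) (x r) Finset.subset_union_left Finset.subset_union_right
      (fun a ha b hb hab => hne (huniq a j1 j2 ha (hab ▸ hb))) (hfav j1) (hfav j2)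
      p q r s hpT hqT hrT hsT hpq hrs hxp (by linarith) hxr (by linarith)
    have ok : ∀ i, OkPair (T j1 ∪ T j2) (v i) (fracVal (v i) (x p) (x r) p q r s) g h := by
      intro i
      fin_cases i
      · exact ok0
      · exact ok1
    let c' : Fin k → ι := fun j => if j = j1 then g else if j = j2 then h else c j
    have hc1 : c' j1 = g := by simp [c']
    have hc2 : c' j2 = h := by simp [c', hne.symm]
    have hc3 : ∀ j, j ≠ j1 → j ≠ j2 → c' j = c j := fun j a b => by simp [c', a, b]
    have hc'T : ∀ j, c' j ∈ T j := by
      intro j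
      by_cases a : j = j1
      · subst a; rwa [hc1]
      by_cases b : j = j2
      · subst b; rwa [hc2]
      rw [hc3 j a b]; exact hc j
    have hsum : ∀ i, ∑ j, v i (c' j) =
        1 / 3 + (v i g + v i h - fracVal (v i) (x p) (x r) p q r s) := by
      intro i
      have e : ∑ j, (v i (c' j) - ∑ g ∈ T j, x g * v i g) =
          (v i (c' j1) - ∑ g ∈ T j1, x g * v i g) + (v i (c' j2) - ∑ g ∈ T j2, x g * v i g) := by
        apply Fintype.sum_eq_add j1 j2 hne
        rintro j ⟨a, b⟩
        rw [hc3 j a b]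
        exact hsingle j (hothers j a b) i
      rw [Finset.sum_sub_distrib, hthird, hc1, hc2] at e
      have := hfr i
      linarith
    apply finish_transversal k T hTdisj v c' hc'T
    intro i
    obtain ⟨ha, o, ho, hog, hoh, hb⟩ := ok i
    rw [hsum i]
    constructor
    · right
      rcases ha with ha | ha
      · exact ⟨j1, by rw [hc1]; linarith⟩
      · exact ⟨j2, by rw [hc2]; linarith⟩
    · right
      refine ⟨o, ?_, by linarith⟩
      intro j hj
      rcases Finset.mem_union.1 ho with ho | ho
      · have := huniq o j1 j ho (hj ▸ hc'T j)
        subst this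
        exact hog (hj.trans hc1)
      · have := huniq o j2 j ho (hj ▸ hc'T j)
        subst this
        exact hoh (hj.trans hc2)
  · push Not at hcase
    apply finish_transversal k T hTdisj v c hc
    intro i
    by_cases hex : ∃ j1, 2 ≤ #(P j1)
    · obtain ⟨j1, h1⟩ := hex
      have e : ∑ j, (v i (c j) - ∑ g ∈ T j, x g * v i g) =
          v i (c j1) - ∑ g ∈ T j1, x g * v i g := by
        apply Fintype.sum_eq_single j1
        intro j hj
        exact hsingle j (hcase j1 j hj.symm h1) i
      rw [Finset.sum_sub_distrib, hthird] at e
      have hsplit := Finset.add_sum_erase (T j1) (fun g => x g * v i g) (hc j1)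
      have hsplit1 := Finset.add_sum_erase (T j1) x (hc j1)
      rw [hxT] at hsplit1
      have hne : ((T j1).erase (c j1)).Nonempty := by
        rw [← Finset.card_pos, Finset.card_erase_of_mem (hc j1), hT3]; norm_num
      obtain ⟨o, ho, hmax⟩ := Finset.exists_max_image _ (v i) hne
      have hub : ∑ g ∈ (T j1).erase (c j1), x g * v i g ≤
          (∑ g ∈ (T j1).erase (c j1), x g) * v i o := by
        rw [Finset.sum_mul]
        exact Finset.sum_le_sum (fun g hg => mul_le_mul_of_nonneg_left (hmax g hg) (hx g))
      have hlb : 0 ≤ ∑ g ∈ (T j1).erase (c j1), x g * v i g :=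
        Finset.sum_nonneg (fun g _ => mul_nonneg (hx g) (hv i g))
      have hlb1 : 0 ≤ ∑ g ∈ (T j1).erase (c j1), x g := Finset.sum_nonneg (fun g _ => hx g)
      have hb := mul_nonneg (sub_nonneg.2 (hcx j1)) (hv i (c j1))
      have hb2 := mul_nonneg (sub_nonneg.2 (hcx j1)) (hv i o)
      have hb3 := mul_nonneg hlb1 (hv i (c j1))
      have hE : ∑ g ∈ (T j1).erase (c j1), x g = 1 - x (c j1) := by linarith
      rw [hE] at hub hb3
      constructor
      · right
        exact ⟨j1, by nlinarith⟩
      · right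
        refine ⟨o, ?_, by nlinarith⟩
        intro j hj
        have hoT := Finset.mem_of_mem_erase ho
        have := huniq o j1 j hoT (hj ▸ hc j)
        subst this
        exact Finset.ne_of_mem_erase ho hj
    · push Not at hex
      have e : ∑ j, (v i (c j) - ∑ g ∈ T j, x g * v i g) = 0 :=
        Finset.sum_eq_zero (fun j _ => hsingle j (hex j) i)
      rw [Finset.sum_sub_distrib, hthird] at e
      exact ⟨Or.inl (by linarith), Or.inl (by linarith)⟩
end
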